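/- arXiv:0803.4392 — 3 statements merged into one kernel-verified Lean document; each statement's English description precedes it below -/
import Mathlib

section
/- Let (n_k) be an increasing sequence of positive integers such that n_k divides n_{k+1} for every k. Then for every f ∈ L¹(𝕋) and every λ > 0, the Lebesgue measure of {x ∈ 𝕋 : sup_k R_{n_k}|f|(x) > λ} is at most (1/λ)·‖f‖_{L¹}. -/
open MeasureTheory Filter Set

/-- The circle `𝕋 = ℝ/ℤ` with its Lebesgue (Haar) probability measure. -/
abbrev Circle1 := AddCircle (1 : ℝ)

/-- The Riemann sum operator `R_n f(x) = (1/n) ∑_{k=0}^{n-1} f(x + k/n)`. -/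
noncomputable def RiemannSum (n : ℕ) (f : Circle1 → ℝ) (x : Circle1) : ℝ :=
  (n : ℝ)⁻¹ * ∑ k ∈ Finset.range n, f (x + (((k : ℝ) / (n : ℝ) : ℝ) : Circle1))

/-!
`R_n` averages over the translations by the finite subgroup `(1/n)ℤ/ℤ`, and divisibility of the
`n_k` makes these subgroups increase. The argument works for any increasing family `H_i` of finite
groups of measure-preserving maps: decompose the set where some average exceeds `λ` according to
the *largest* index `i` for which the `H_i`-average does. Every average with index `j ≥ i` is
`H_i`-invariant, hence so is the piece with index `i`, and on an `H_i`-invariant set `g` and its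
`H_i`-average have the same integral.
-/

open scoped ENNReal

section OrbitAverage

variable {G X : Type*} [AddGroup G] [AddAction G X]

/-- The average of `g` over the `H`-translates of `x`, for a finite subgroup `H` of a group acting
on `X`. The sum is written as a `tsum` so that no enumeration of `H` has to be carried along. -/
noncomputable def orbitAverage (H : AddSubgroup G) (g : X → ℝ≥0∞) (x : X) : ℝ≥0∞ :=
  (Nat.card H : ℝ≥0∞)⁻¹ * ∑' h : H, g ((h : G) +ᵥ x)

lemma orbitAverage_vadd {H : AddSubgroup G} {h : G} (hh : h ∈ H) (g : X → ℝ≥0∞) (x : X) :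
    orbitAverage H g (h +ᵥ x) = orbitAverage H g x := by
  simp only [orbitAverage, vadd_vadd]
  congr 1
  exact (Equiv.addRight (⟨h, hh⟩ : H)).tsum_eq fun k : H => g ((k : G) +ᵥ x)

lemma orbitAverage_zmultiples {a : G} (ha : IsOfFinAddOrder a) (g : X → ℝ≥0∞) (x : X) :
    orbitAverage (AddSubgroup.zmultiples a) g x =
      (addOrderOf a : ℝ≥0∞)⁻¹ * ∑ k ∈ Finset.range (addOrderOf a), g (k • a +ᵥ x) := by
  rw [orbitAverage, Nat.card_zmultiples, ← (finEquivZMultiples ha).tsum_eq, tsum_fintype,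
    ← Fin.sum_univ_eq_sum_range fun k => g (k • a +ᵥ x)]
  simp only [finEquivZMultiples_apply]

variable [MeasurableSpace X] [MeasurableConstVAdd G X] {μ : Measure X} [VAddInvariantMeasure G X μ]
  {g : X → ℝ≥0∞}

lemma aemeasurable_comp_const_vadd {β : Type*} [MeasurableSpace β] {f : X → β}
    (hf : AEMeasurable f μ) (c : G) : AEMeasurable (fun x => f (c +ᵥ x)) μ :=
  hf.comp_quasiMeasurePreserving (measurePreserving_vadd c μ).quasiMeasurePreserving

lemma aemeasurable_orbitAverage (H : AddSubgroup G) [Countable H] (hg : AEMeasurable g μ) :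
    AEMeasurable (orbitAverage H g) μ :=
  (AEMeasurable.tsum fun h : H => aemeasurable_comp_const_vadd hg (h : G)).const_mul _

lemma setLIntegral_orbitAverage (H : AddSubgroup G) [Finite H] (hg : AEMeasurable g μ)
    {A : Set X} (hA : ∀ h ∈ H, (h +ᵥ ·) ⁻¹' A = A) :
    ∫⁻ x in A, orbitAverage H g x ∂μ = ∫⁻ x in A, g x ∂μ := by
  have translate (h : H) : ∫⁻ x in A, g ((h : G) +ᵥ x) ∂μ = ∫⁻ x in A, g x ∂μ := by
    have := (measurePreserving_vadd (h : G) μ).setLIntegral_comp_preimage_emb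
      (measurableEmbedding_const_vadd (h : G)) g A
    rwa [hA h h.2] at this
  have card_ne_zero : (Nat.card H : ℝ≥0∞) ≠ 0 := Nat.cast_ne_zero.2 Nat.card_pos.ne'
  simp only [orbitAverage]
  rw [lintegral_const_mul' _ _ (ENNReal.inv_ne_top.2 card_ne_zero),
    lintegral_tsum fun h : H => (aemeasurable_comp_const_vadd hg (h : G)).restrict]
  simp only [translate]
  rw [ENNReal.tsum_const, ENat.card_eq_coe_natCard, ENat.toENNReal_coe, ← mul_assoc,
    ENNReal.inv_mul_cancel card_ne_zero (ENNReal.natCast_ne_top _), one_mul]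

lemma mul_measure_le_setLIntegral_of_le_orbitAverage (H : AddSubgroup G) [Finite H]
    (hg : AEMeasurable g μ) {A : Set X} (hA : ∀ h ∈ H, (h +ᵥ ·) ⁻¹' A = A) {c : ℝ≥0∞}
    (hc : ∀ x ∈ A, c ≤ orbitAverage H g x) :
    c * μ A ≤ ∫⁻ x in A, g x ∂μ := by
  rw [← setLIntegral_orbitAverage H hg hA, ← setLIntegral_const]
  exact setLIntegral_mono_ae (aemeasurable_orbitAverage H hg).restrict (ae_of_all _ hc)

variable {ι : Type*} [LinearOrder ι] {H : ι → AddSubgroup G} [∀ i, Finite (H i)]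

lemma mul_measure_exists_mem_lt_orbitAverage_le (hH : Monotone H) (hg : AEMeasurable g μ)
    (c : ℝ≥0∞) (s : Finset ι) :
    c * μ {x | ∃ i ∈ s, c < orbitAverage (H i) g x} ≤
      ∫⁻ x in {x | ∃ i ∈ s, c < orbitAverage (H i) g x}, g x ∂μ := by
  induction s using Finset.induction_on_min with
  | empty => simp
  | insert i s hi ih =>
    set V : Set X := {x | ∃ j ∈ s, c < orbitAverage (H j) g x}
    set A : Set X := {x | c < orbitAverage (H i) g x} \ V
    have split_first : {x | ∃ j ∈ insert i s, c < orbitAverage (H j) g x} = V ∪ A := by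
      ext x
      simp [V, A, or_comm]
    have nullMeasurable (j : ι) : NullMeasurableSet {x | c < orbitAverage (H j) g x} μ :=
      nullMeasurableSet_lt aemeasurable_const (aemeasurable_orbitAverage (H j) hg)
    have hV : NullMeasurableSet V μ := by
      have : V = ⋃ j ∈ s, {x | c < orbitAverage (H j) g x} := by ext; simp [V]
      rw [this]
      exact s.nullMeasurableSet_biUnion fun j _ => nullMeasurable j
    have invariant : ∀ h ∈ H i, (h +ᵥ ·) ⁻¹' A = A := by
      intro h hh
      have average_vadd (j : ι) (hj : i ≤ j) (x : X) :
          orbitAverage (H j) g (h +ᵥ x) = orbitAverage (H j) g x :=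
        orbitAverage_vadd (hH hj hh) g x
      ext x
      simp +contextual [A, V, average_vadd, (hi _ _).le]
    calc c * μ {x | ∃ j ∈ insert i s, c < orbitAverage (H j) g x}
      _ ≤ c * μ V + c * μ A := by
        rw [split_first, ← mul_add]
        gcongr
        exact measure_union_le V A
      _ ≤ ∫⁻ x in V, g x ∂μ + ∫⁻ x in A, g x ∂μ :=
        add_le_add ih <|
          mul_measure_le_setLIntegral_of_le_orbitAverage (H i) hg invariant fun _ hx => hx.1.le
      _ = ∫⁻ x in {x | ∃ j ∈ insert i s, c < orbitAverage (H j) g x}, g x ∂μ := by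
        rw [split_first, Measure.restrict_union₀ disjoint_sdiff_right.aedisjoint
          ((nullMeasurable i).diff hV), lintegral_add_measure]

theorem mul_measure_exists_lt_orbitAverage_le [Countable ι] (hH : Monotone H)
    (hg : AEMeasurable g μ) (c : ℝ≥0∞) :
    c * μ {x | ∃ i, c < orbitAverage (H i) g x} ≤
      ∫⁻ x in {x | ∃ i, c < orbitAverage (H i) g x}, g x ∂μ := by
  set E : Finset ι → Set X := fun s => {x | ∃ i ∈ s, c < orbitAverage (H i) g x}
  have exhaust : {x | ∃ i, c < orbitAverage (H i) g x} = ⋃ s, E s := by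
    ext x
    simp only [E, mem_ofPred_eq, mem_iUnion]
    exact ⟨fun ⟨i, hx⟩ => ⟨{i}, i, Finset.mem_singleton_self i, hx⟩, fun ⟨_, i, _, hx⟩ => ⟨i, hx⟩⟩
  have monotone_E : Monotone E := fun _ _ hst _ ⟨i, hi, hx⟩ => ⟨i, hst hi, hx⟩
  rw [exhaust, monotone_E.directed_le.measure_iUnion, ENNReal.mul_iSup]
  exact iSup_le fun s => (mul_measure_exists_mem_lt_orbitAverage_le hH hg c s).trans <|
    lintegral_mono_set (subset_iUnion E s)

end OrbitAverage

/-- The subgroup `(1/n)ℤ/ℤ` of the circle, over whose translates `RiemannSum n` averages. -/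
noncomputable def rotationSubgroup (n : ℕ) : AddSubgroup Circle1 :=
  AddSubgroup.zmultiples ((1 / n : ℝ) : Circle1)

lemma addOrderOf_coe_one_div {n : ℕ} (hn : n ≠ 0) : addOrderOf ((1 / n : ℝ) : Circle1) = n :=
  AddCircle.addOrderOf_period_div (Nat.pos_of_ne_zero hn)

lemma isOfFinAddOrder_coe_one_div {n : ℕ} (hn : n ≠ 0) : IsOfFinAddOrder ((1 / n : ℝ) : Circle1) :=
  addOrderOf_pos_iff.1 <| (addOrderOf_coe_one_div hn).symm ▸ Nat.pos_of_ne_zero hn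

lemma finite_rotationSubgroup {n : ℕ} (hn : n ≠ 0) : Finite (rotationSubgroup n) :=
  finite_zmultiples.2 (isOfFinAddOrder_coe_one_div hn)

lemma rotationSubgroup_le_of_dvd {m n : ℕ} (hn : n ≠ 0) (h : m ∣ n) :
    rotationSubgroup m ≤ rotationSubgroup n := by
  obtain ⟨d, rfl⟩ := h
  have hd : (d : ℝ) ≠ 0 := Nat.cast_ne_zero.2 (right_ne_zero_of_mul hn)
  refine AddSubgroup.zmultiples_le_of_mem (AddSubgroup.mem_zmultiples_iff.2 ⟨d, ?_⟩)
  rw [natCast_zsmul, ← AddCircle.coe_nsmul, nsmul_eq_mul, Nat.cast_mul, mul_one_div,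
    div_mul_cancel_right₀ hd, one_div]

lemma ofReal_riemannSum {n : ℕ} (hn : n ≠ 0) {g : Circle1 → ℝ} (hg : ∀ x, 0 ≤ g x) (x : Circle1) :
    ENNReal.ofReal (RiemannSum n g x) =
      orbitAverage (rotationSubgroup n) (fun y => ENNReal.ofReal (g y)) x := by
  have rotate (k : ℕ) : x + ((k / n : ℝ) : Circle1) = k • ((1 / n : ℝ) : Circle1) +ᵥ x := by
    rw [vadd_eq_add, add_comm, ← AddCircle.coe_nsmul, nsmul_eq_mul, mul_one_div]
  rw [rotationSubgroup, orbitAverage_zmultiples (isOfFinAddOrder_coe_one_div hn),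
    addOrderOf_coe_one_div hn, RiemannSum, ENNReal.ofReal_mul (by positivity),
    ENNReal.ofReal_inv_of_pos (by positivity), ENNReal.ofReal_natCast,
    ENNReal.ofReal_sum_of_nonneg fun _ _ => hg _]
  simp only [rotate]

theorem jessen_maximal_inequality_general {ι : Type*} [LinearOrder ι] [Countable ι] {n : ι → ℕ}
    (hn : ∀ i, n i ≠ 0) (hdvd : ∀ i j, i ≤ j → n i ∣ n j) {f : Circle1 → ℝ}
    (hf : AEMeasurable f volume) {lam : ℝ} (hlam : 0 < lam) :
    volume {x : Circle1 | ∃ i, lam < RiemannSum (n i) (fun y => |f y|) x} ≤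
      (∫⁻ x in {x | ∃ i, lam < RiemannSum (n i) (fun y => |f y|) x}, ENNReal.ofReal |f x|) /
        ENNReal.ofReal lam := by
  have (i : ι) := finite_rotationSubgroup (hn i)
  have monotone : Monotone fun i => rotationSubgroup (n i) := fun i j hij =>
    rotationSubgroup_le_of_dvd (hn j) (hdvd i j hij)
  have lt_riemannSum_iff (i : ι) (x : Circle1) : lam < RiemannSum (n i) (fun y => |f y|) x ↔
      ENNReal.ofReal lam <
        orbitAverage (rotationSubgroup (n i)) (fun y => ENNReal.ofReal |f y|) x := by
    rw [← ofReal_riemannSum (hn i) fun y => abs_nonneg (f y),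
      ENNReal.ofReal_lt_ofReal_iff_of_nonneg hlam.le]
  simp only [lt_riemannSum_iff]
  rw [ENNReal.le_div_iff_mul_le (.inl (ENNReal.ofReal_pos.2 hlam).ne')
    (.inl ENNReal.ofReal_ne_top), mul_comm]
  exact mul_measure_exists_lt_orbitAverage_le monotone hf.abs.ennreal_ofReal _

/-- **Jessen's theorem (maximal inequality).** If `(n k)` is an increasing sequence of
positive integers with `n k ∣ n (k+1)` for all `k`, then for every `f ∈ L¹(𝕋)` and every
`λ > 0`, the measure of `{x : sup_k R_{n k}|f|(x) > λ}` is at most `‖f‖_{L¹}/λ`. -/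
theorem jessen_maximal_inequality
    (n : ℕ → ℕ) (hpos : ∀ k, 1 ≤ n k) (hmono : StrictMono n)
    (hdvd : ∀ k, n k ∣ n (k + 1))
    (f : Circle1 → ℝ) (hf : Integrable f volume) (lam : ℝ) (hlam : 0 < lam) :
    volume {x : Circle1 | ∃ k, lam < RiemannSum (n k) (fun y => |f y|) x} ≤
      ENNReal.ofReal (lam⁻¹ * ∫ y, |f y|) := by
  rw [inv_mul_eq_div, ENNReal.ofReal_div_of_pos hlam,
    ofReal_integral_eq_lintegral_ofReal hf.abs (ae_of_all _ fun _ => abs_nonneg _)]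
  exact (jessen_maximal_inequality_general (fun k => Nat.ne_of_gt (hpos k))
    (fun _ _ => Nat.le_induction dvd_rfl (fun k _ ih => ih.trans (hdvd k)) _) hf.aemeasurable
    hlam).trans <| ENNReal.div_le_div_right (setLIntegral_le_lintegral _ _) _
end

section
/- For every l ≥ 1 there exists a bijection τ_l : 𝕋 → 𝕋^∞ such that: (1) τ_l is measure preserving, i.e. λ(τ_l(A)) = |A| for every Lebesgue measurable A ⊆ 𝕋; (2) for every divisor n of l and every t with 0 ≤ t < l/n, the image τ_l(I_l(n,t)) of the Riemann set I_l(n,t) is a rectangle of the form B_m(j_1,…,j_d) with m = l/n. -/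
open MeasureTheory Set

/-- The infinite torus `𝕋^∞ = ∏_{k=1}^∞ 𝕋`. -/
abbrev Tinf := ℕ → Circle1

/-- `nthPrime k` is the `(k+1)`-st prime: `nthPrime 0 = 2 = p_1`, … -/
noncomputable def nthPrime (k : ℕ) : ℕ := Nat.nth Nat.Prime k

/-- The arc `[a, b) ⊆ 𝕋`. -/
def circleIco (a b : ℝ) : Set Circle1 := (fun r : ℝ => (r : Circle1)) '' Set.Ico a b

/-- The rectangle `B_m(j_1,…,j_d)` in `𝕋^∞`, where `m = p_1^{L_1} ⋯ p_d^{L_d}`. -/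
def Rect (d : ℕ) (L j : Fin d → ℕ) : Set Tinf :=
  {x | ∀ k : Fin d,
    x k.val ∈ circleIco ((j k : ℝ) / ((nthPrime k.val ^ L k : ℕ) : ℝ))
      (((j k : ℝ) + 1) / ((nthPrime k.val ^ L k : ℕ) : ℝ))}

/-- The Riemann set `I_l(n,t) = ⋃_{i=0}^{n-1} [t/l + i/n, (t+1)/l + i/n) ⊆ 𝕋`. -/
def RiemannSet (l n t : ℕ) : Set Circle1 :=
  ⋃ i ∈ Finset.range n,
    (fun r : ℝ => (r : Circle1)) ''
      Set.Ico ((t : ℝ) / l + (i : ℝ) / n) (((t : ℝ) + 1) / l + (i : ℝ) / n)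

/-- `μ` is the product Lebesgue probability measure on `𝕋^∞`: it is a probability
measure giving each finite-dimensional cylinder its product measure. -/
def IsProductLebesgue (μ : Measure Tinf) : Prop :=
  IsProbabilityMeasure μ ∧
    ∀ (s : Finset ℕ) (A : ℕ → Set Circle1), (∀ i, MeasurableSet (A i)) →
      μ {x | ∀ i ∈ s, x i ∈ A i} = ∏ i ∈ s, volume (A i)

/-!
Number the arcs of length `1 / l` from `0` to `l - 1`. The Riemann set `I_l(n, t)` is the union of
the arcs whose number is congruent to `t` modulo `m = l / n`; the rectangles `B_m` are cut out by
the leading base-`p_k` digits of the coordinates. By the Chinese remainder theorem a residue modulo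
`m` is a family of residues modulo the prime powers `p ^ M` exactly dividing `m`, that is, of
strings of `M` lowest base-`p` digits, and reversing these strings makes them strings of leading
digits, compatibly with shortening them. This matches the `l` arcs with the `l` boxes `B_l` so that
every Riemann set corresponds to a rectangle.

An arc and the matching box are atomless standard Borel spaces of the same mass, so there is a
measure preserving bijection between them: the distribution function of an atomless law on `ℝ`
carries it to Lebesgue measure on `[0, 1]` and is injective off a null set, and it becomes bijective
after a change on null sets.
-/

section NullSingletons

variable {X Y : Type*} [MeasurableSpace X] [MeasurableSpace Y] {μ : Measure X} {ν : Measure Y}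

theorem nullSingletonClass_of_measurePreserving [MeasurableSingletonClass Y]
    [NullSingletonClass ν] {f : X → Y} (hf : MeasurePreserving f μ ν) : NullSingletonClass μ where
  measure_singleton x := by
    refine measure_mono_null (singleton_subset_iff.2 (mem_preimage.2 rfl) : {x} ⊆ f ⁻¹' {f x}) ?_
    rw [hf.measure_preimage (measurableSet_singleton _).nullMeasurableSet, measure_singleton]

theorem nullSingletonClass_comap_subtype [NullSingletonClass μ] {s : Set X}
    (hs : MeasurableSet s) : NullSingletonClass (μ.comap ((↑) : s → X)) where
  measure_singleton x := by
    rw [comap_subtype_coe_apply hs, image_singleton, measure_singleton]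

theorem uncountable_of_nullSingletonClass (μ : Measure X) [NullSingletonClass μ] [NeZero μ] :
    Uncountable X := by
  rw [← not_countable_iff]
  intro _
  exact NeZero.ne μ (Measure.measure_univ_eq_zero.1 (countable_univ.measure_zero μ))

theorem exists_null_not_countable [StandardBorelSpace X] [Uncountable X] (μ : Measure X)
    [SFinite μ] : ∃ Z : Set X, MeasurableSet Z ∧ μ Z = 0 ∧ ¬ Z.Countable := by
  have hℝ : ¬ (univ : Set ℝ).Countable := Cardinal.not_countable_real
  let φ : X ≃ᵐ ℝ × ℝ := PolishSpace.measurableEquivOfNotCountable not_countable not_countable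
  have hfst : Measurable fun x => (φ x).1 := measurable_fst.comp φ.measurable
  -- The level sets of the first coordinate are uncountable, and only countably many have
  -- positive measure.
  obtain ⟨r, hr⟩ : ∃ r, μ {x | (φ x).1 = r} = 0 := by
    by_contra! hpos
    refine hℝ ((Measure.countable_meas_level_set_pos (μ := μ) hfst).mono fun r _ => ?_)
    exact pos_iff_ne_zero.2 (hpos r)
  refine ⟨_, hfst (measurableSet_singleton r), hr, fun hcount => hℝ ?_⟩
  refine MapsTo.countable_of_injOn (f := fun s => φ.symm (r, s)) (fun s _ => ?_) ?_ hcount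
  · simp
  · exact (φ.symm.injective.comp (Prod.mk_right_injective r)).injOn

end NullSingletons

section MeasureIsomorphism

variable {X Y : Type*} [MeasurableSpace X] [StandardBorelSpace X] [MeasurableSpace Y]
  [StandardBorelSpace Y] {μ : Measure X} {ν : Measure Y}

open Classical in
theorem exists_measurableEquiv_eqOn {f : X → Y} {s : Set X} (hs : MeasurableSet s)
    (hf : Measurable f) (hinj : InjOn f s) (hsc : ¬ sᶜ.Countable) (hfsc : ¬ (f '' s)ᶜ.Countable) :
    ∃ e : X ≃ᵐ Y, EqOn e f s := by
  rw [← range_domRestrict] at hfsc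
  have := hs.standardBorel
  have hemb : MeasurableEmbedding (s.domRestrict f) :=
    (hf.comp measurable_subtype_coe).measurableEmbedding (injOn_iff_injective.1 hinj)
  have := hs.compl.standardBorel
  have := hemb.measurableSet_range.compl.standardBorel
  let onCompl : (sᶜ : Set X) ≃ᵐ ((range (s.domRestrict f))ᶜ : Set Y) :=
    PolishSpace.measurableEquivOfNotCountable hsc hfsc
  refine ⟨(MeasurableEquiv.sumCompl hs).symm.trans
    ((hemb.equivRange.sumCongr onCompl).trans (MeasurableEquiv.sumCompl hemb.measurableSet_range)),
    fun x hx => ?_⟩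
  have hx' : (MeasurableEquiv.sumCompl hs).symm x = .inl ⟨x, hx⟩ :=
    Equiv.sumCompl_symm_apply_of_pos hx
  rw [MeasurableEquiv.trans_apply, MeasurableEquiv.trans_apply, hx']
  exact congrArg Subtype.val (hemb.equivRange_apply ⟨x, hx⟩)

theorem exists_measurableEquiv_ae_eq [Uncountable X] [Uncountable Y] [SFinite μ] [SFinite ν]
    {f : X → Y} (hf : MeasurePreserving f μ ν) {s : Set X} (hs : MeasurableSet s)
    (hμs : μ sᶜ = 0) (hinj : InjOn f s) :
    ∃ e : X ≃ᵐ Y, e =ᵐ[μ] f := by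
  obtain ⟨Z, hZ, hμZ, hZunc⟩ := exists_null_not_countable μ
  obtain ⟨W, hW, hνW, hWunc⟩ := exists_null_not_countable ν
  -- Giving up uncountable null sets on both sides leaves two uncountable, hence Borel isomorphic,
  -- complements.
  let s' := s \ (Z ∪ f ⁻¹' W)
  have hs' : MeasurableSet s' := hs.diff (hZ.union (hf.measurable hW))
  have hμs' : μ s'ᶜ = 0 := by
    rw [Set.compl_sdiff, measure_union_null_iff, measure_union_null_iff,
      hf.measure_preimage hW.nullMeasurableSet]
    exact ⟨⟨hμZ, hνW⟩, hμs⟩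
  have hZs' : Z ⊆ s'ᶜ := fun x hx hxs' => hxs'.2 (.inl hx)
  have hWs' : W ⊆ (f '' s')ᶜ := by
    rintro _ hy ⟨x, hx, rfl⟩
    exact hx.2 (.inr hy)
  obtain ⟨e, he⟩ := exists_measurableEquiv_eqOn hs' hf.measurable
    (hinj.mono sdiff_subset) (fun h => hZunc (h.mono hZs')) (fun h => hWunc (h.mono hWs'))
  exact ⟨e, measure_mono_null (fun x hx hxs' => hx (he hxs')) hμs'⟩

end MeasureIsomorphism

section Cdf

theorem injOn_compl_preimage_nonSingleton {α β : Type*} [LinearOrder α] (f : α → β) :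
    InjOn f (f ⁻¹' {c | ∃ x y, x < y ∧ f x = c ∧ f y = c})ᶜ := by
  intro x hx y _ hxy
  by_contra hne
  rcases lt_or_gt_of_ne hne with h | h
  · exact hx ⟨x, y, h, rfl, hxy.symm⟩
  · exact hx ⟨y, x, h, hxy.symm, rfl⟩

variable (ν : Measure ℝ) [IsProbabilityMeasure ν] [NullSingletonClass ν]

open ProbabilityTheory Filter Topology

theorem continuous_cdf : Continuous (cdf ν) := by
  refine continuous_iff_continuousAt.2 fun x => ?_
  rw [(monotone_cdf ν).continuousAt_iff_leftLim_eq_rightLim, StieltjesFunction.rightLim_eq]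
  have hjump := (cdf ν).measure_singleton x
  rw [measure_cdf, measure_singleton, eq_comm, ENNReal.ofReal_eq_zero, sub_nonpos] at hjump
  exact ((monotone_cdf ν).leftLim_le le_rfl).antisymm hjump

theorem measure_preimage_cdf_Iic (u : ℝ) :
    ν (cdf ν ⁻¹' Iic u) = ENNReal.ofReal (min u 1) := by
  rcases le_or_gt 1 u with hu1 | hu1
  · have huniv : cdf ν ⁻¹' Iic u = univ := eq_univ_of_forall fun x => (cdf_le_one ν x).trans hu1
    rw [huniv, measure_univ, min_eq_right hu1, ENNReal.ofReal_one]
  rw [min_eq_left hu1.le]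
  rcases (cdf ν ⁻¹' Iic u).eq_empty_or_nonempty with hempty | hne
  · have hlt : ∀ x, u < cdf ν x := fun x => not_le.1 fun hx => hempty.subset hx
    have hu0 : u ≤ 0 := ge_of_tendsto (tendsto_cdf_atBot ν) (.of_forall fun x => (hlt x).le)
    rw [hempty, measure_empty, ENNReal.ofReal_of_nonpos hu0]
  · obtain ⟨b, hb⟩ := ((tendsto_cdf_atTop ν).eventually_const_lt hu1).exists
    have hbdd : BddAbove (cdf ν ⁻¹' Iic u) :=
      ⟨b, fun x hx => ((monotone_cdf ν).reflect_lt (lt_of_le_of_lt hx hb)).le⟩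
    have hclosed : IsClosed (cdf ν ⁻¹' Iic u) := isClosed_Iic.preimage (continuous_cdf ν)
    set x := sSup (cdf ν ⁻¹' Iic u)
    have hx : cdf ν x ≤ u := hclosed.csSup_mem hne hbdd
    have hIic : cdf ν ⁻¹' Iic u = Iic x :=
      Subset.antisymm (fun y hy => le_csSup hbdd hy) fun y hy => (monotone_cdf ν hy).trans hx
    have hgt : ∀ y ∈ Ioi x, u < cdf ν y := fun y hy =>
      not_le.1 fun h => notMem_Iic.2 hy (hIic.subset h)
    have hux : u ≤ cdf ν x :=
      ge_of_tendsto ((continuous_cdf ν).continuousWithinAt (s := Ioi x))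
        (eventually_mem_nhdsWithin.mono fun y hy => (hgt y hy).le)
    rw [hIic, ← ofReal_cdf, hx.antisymm hux]

theorem measurePreserving_cdf : MeasurePreserving (cdf ν) ν (volume.restrict (Icc 0 1)) := by
  have hmeas : Measurable (cdf ν) := (monotone_cdf ν).measurable
  refine ⟨hmeas, Measure.ext_of_Iic _ _ fun u => ?_⟩
  rw [Measure.map_apply hmeas measurableSet_Iic, measure_preimage_cdf_Iic,
    Measure.restrict_apply measurableSet_Iic, inter_comm, ← Ici_inter_Iic, inter_assoc,
    Iic_inter_Iic, Ici_inter_Iic, Real.volume_Icc, sub_zero, min_comm]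

theorem exists_measurableEquiv_measurePreserving_restrict_Icc_of_real :
    ∃ e : ℝ ≃ᵐ ℝ, MeasurePreserving e ν (volume.restrict (Icc 0 1)) := by
  have hcdf := measurePreserving_cdf ν
  let C : Set ℝ := {c | ∃ x y, x < y ∧ cdf ν x = c ∧ cdf ν y = c}
  have hC : C.Countable := (monotone_cdf ν).countable_setOfPred_two_preimages
  obtain ⟨e, he⟩ := exists_measurableEquiv_ae_eq hcdf (s := (cdf ν ⁻¹' C)ᶜ)
    (hcdf.measurable hC.measurableSet).compl
    (by rw [compl_compl, hcdf.measure_preimage hC.measurableSet.nullMeasurableSet,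
      hC.measure_zero])
    (injOn_compl_preimage_nonSingleton _)
  exact ⟨e, hcdf.congr e.measurable he.symm⟩

end Cdf

section AtomlessIsomorphism

variable {X Y : Type*} [MeasurableSpace X] [StandardBorelSpace X] [MeasurableSpace Y]
  [StandardBorelSpace Y]

theorem exists_measurableEquiv_measurePreserving_restrict_Icc (μ : Measure X)
    [IsProbabilityMeasure μ] [NullSingletonClass μ] :
    ∃ e : X ≃ᵐ ℝ, MeasurePreserving e μ (volume.restrict (Icc 0 1)) := by
  have := uncountable_of_nullSingletonClass μ
  let φ : X ≃ᵐ ℝ :=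
    PolishSpace.measurableEquivOfNotCountable not_countable not_countable
  have hφ : MeasurePreserving φ μ (μ.map φ) := φ.measurable.measurePreserving μ
  have := nullSingletonClass_of_measurePreserving (hφ.symm φ)
  have := Measure.isProbabilityMeasure_map (μ := μ) φ.measurable.aemeasurable
  obtain ⟨e, he⟩ := exists_measurableEquiv_measurePreserving_restrict_Icc_of_real (μ.map φ)
  exact ⟨φ.trans e, hφ.trans he⟩

theorem exists_measurableEquiv_measurePreserving {μ : Measure X} {ν : Measure Y}
    [IsFiniteMeasure μ] [NeZero μ] [NullSingletonClass μ] [NullSingletonClass ν]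
    (hμν : μ univ = ν univ) : ∃ e : X ≃ᵐ Y, MeasurePreserving e μ ν := by
  have h0 : μ univ ≠ 0 := (NeZero.ne μ) ∘ Measure.measure_univ_eq_zero.1
  have htop : μ univ ≠ ⊤ := measure_ne_top μ univ
  have : IsFiniteMeasure ν := ⟨hμν ▸ measure_lt_top μ univ⟩
  have : NeZero ν := ⟨fun h => h0 (by rw [hμν, h]; rfl)⟩
  have : NullSingletonClass ((μ univ)⁻¹ • μ) := ⟨fun x => by simp⟩
  have : NullSingletonClass ((ν univ)⁻¹ • ν) := ⟨fun x => by simp⟩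
  obtain ⟨e₁, he₁⟩ := exists_measurableEquiv_measurePreserving_restrict_Icc ((μ univ)⁻¹ • μ)
  obtain ⟨e₂, he₂⟩ := exists_measurableEquiv_measurePreserving_restrict_Icc ((ν univ)⁻¹ • ν)
  refine ⟨e₁.trans e₂.symm, ?_⟩
  have h := (he₁.trans (he₂.symm e₂)).smul_measure (μ univ)
  rwa [← hμν, smul_smul, smul_smul, ENNReal.mul_inv_cancel h0 htop, one_smul, one_smul] at h

end AtomlessIsomorphism

section Fibers

variable {X Y ι : Type*} {a : X → ι} {b : Y → ι}

theorem ofPreimageEquiv_coe (e : ∀ i, a ⁻¹' {i} ≃ b ⁻¹' {i}) {i : ι} (x : a ⁻¹' {i}) :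
    Equiv.ofPreimageEquiv e x = e i x := by
  obtain ⟨x, rfl⟩ := x
  rfl

variable [MeasurableSpace X] [MeasurableSpace Y] [MeasurableSpace ι] [MeasurableSingletonClass ι]
  [Countable ι]

theorem measurable_of_forall_fiber (ha : Measurable a) {f : X → Y}
    (hf : ∀ i, Measurable fun x : a ⁻¹' {i} => f x) : Measurable f := by
  intro B hB
  rw [← inter_univ (f ⁻¹' B), ← preimage_univ (f := a), ← iUnion_of_singleton, preimage_iUnion,
    inter_iUnion]
  refine .iUnion fun i => ?_
  rw [inter_comm, ← Subtype.image_preimage_coe]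
  exact (ha (measurableSet_singleton i)).subtype_image (hf i hB)

theorem measurable_ofPreimageEquiv (ha : Measurable a) {e : ∀ i, a ⁻¹' {i} ≃ b ⁻¹' {i}}
    (he : ∀ i, Measurable (e i)) : Measurable (Equiv.ofPreimageEquiv e) := by
  refine measurable_of_forall_fiber ha fun i => ?_
  simp only [ofPreimageEquiv_coe]
  exact measurable_subtype_coe.comp (he i)

theorem sum_map_comap_fiber (μ : Measure X) (ha : Measurable a) :
    Measure.sum (fun i => (μ.comap ((↑) : a ⁻¹' {i} → X)).map (↑)) = μ := by
  have hfib i : MeasurableSet (a ⁻¹' {i}) := ha (measurableSet_singleton i)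
  simp only [map_comap_subtype_coe (hfib _)]
  rw [← Measure.restrict_iUnion (pairwise_disjoint_fiber a) hfib, ← preimage_iUnion,
    iUnion_of_singleton, preimage_univ, Measure.restrict_univ]

theorem measurePreserving_ofPreimageEquiv {μ : Measure X} {ν : Measure Y} (ha : Measurable a)
    (hb : Measurable b) {e : ∀ i, a ⁻¹' {i} ≃ b ⁻¹' {i}}
    (he : ∀ i, MeasurePreserving (e i) (μ.comap (↑)) (ν.comap (↑))) :
    MeasurePreserving (Equiv.ofPreimageEquiv e) μ ν := by
  have hglue := measurable_ofPreimageEquiv ha fun i => (he i).measurable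
  refine ⟨hglue, ?_⟩
  rw [← sum_map_comap_fiber μ ha, Measure.map_sum hglue.aemeasurable, ← sum_map_comap_fiber ν hb]
  congr 1 with i : 1
  have hcoe : Equiv.ofPreimageEquiv e ∘ ((↑) : a ⁻¹' {i} → X) = (↑) ∘ e i :=
    funext (ofPreimageEquiv_coe e)
  rw [Measure.map_map hglue measurable_subtype_coe, hcoe,
    ← Measure.map_map measurable_subtype_coe (he i).measurable, (he i).map_eq]

theorem exists_measurableEquiv_measurePreserving_fiberwise [StandardBorelSpace X]
    [StandardBorelSpace Y] {μ : Measure X} {ν : Measure Y} [IsFiniteMeasure μ]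
    [NullSingletonClass μ] [NullSingletonClass ν] (ha : Measurable a) (hb : Measurable b)
    (hμa : ∀ i, μ (a ⁻¹' {i}) ≠ 0) (hab : ∀ i, μ (a ⁻¹' {i}) = ν (b ⁻¹' {i})) :
    ∃ e : X ≃ᵐ Y, MeasurePreserving e μ ν ∧ ∀ x, b (e x) = a x := by
  have hfiber (i : ι) : ∃ e : a ⁻¹' {i} ≃ᵐ b ⁻¹' {i},
      MeasurePreserving e (μ.comap (↑)) (ν.comap (↑)) := by
    have hai : MeasurableSet (a ⁻¹' {i}) := ha (measurableSet_singleton i)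
    have hbi : MeasurableSet (b ⁻¹' {i}) := hb (measurableSet_singleton i)
    have := hai.standardBorel
    have := hbi.standardBorel
    have := nullSingletonClass_comap_subtype (μ := μ) hai
    have := nullSingletonClass_comap_subtype (μ := ν) hbi
    have hμi : μ.comap ((↑) : a ⁻¹' {i} → X) univ = μ (a ⁻¹' {i}) := by
      rw [comap_subtype_coe_apply hai, image_univ, Subtype.range_coe]
    have hνi : ν.comap ((↑) : b ⁻¹' {i} → Y) univ = ν (b ⁻¹' {i}) := by
      rw [comap_subtype_coe_apply hbi, image_univ, Subtype.range_coe]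
    have : NeZero (μ.comap ((↑) : a ⁻¹' {i} → X)) :=
      ⟨fun h => hμa i (by rw [← hμi, h]; rfl)⟩
    exact exists_measurableEquiv_measurePreserving (hμi.trans ((hab i).trans hνi.symm))
  choose e he using hfiber
  refine ⟨⟨Equiv.ofPreimageEquiv fun i => (e i).toEquiv, ?_, ?_⟩, ?_, ?_⟩
  · exact measurable_ofPreimageEquiv ha fun i => (e i).measurable
  · exact measurable_ofPreimageEquiv hb (e := fun i => (e i).symm.toEquiv) fun i =>
      (e i).symm.measurable
  · exact measurePreserving_ofPreimageEquiv ha hb he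
  · exact Equiv.ofPreimageEquiv_map _

end Fibers

section Circle

theorem measurePreserving_coe_equivIco (T : ℝ) [Fact (0 < T)] (a : ℝ) :
    MeasurePreserving (fun x : AddCircle T => (AddCircle.equivIco T a x : ℝ)) volume
      (volume.restrict (Ico a (a + T))) := by
  have hmeas : Measurable fun x : AddCircle T => (AddCircle.equivIco T a x : ℝ) :=
    measurable_subtype_coe.comp (AddCircle.measurableEquivIco T a).measurable
  have hmk := AddCircle.measurePreserving_mk T a
  have hid : (fun r : ℝ => (AddCircle.equivIco T a r : ℝ)) =ᵐ[volume.restrict (Ico a (a + T))] id :=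
    (ae_restrict_mem measurableSet_Ico).mono fun r hr =>
      AddCircle.equivIco_coe_of_mem hr
  rw [← restrict_Ico_eq_restrict_Ioc] at hmk
  refine ⟨hmeas, ?_⟩
  rw [← hmk.map_eq, Measure.map_map hmeas hmk.measurable]
  exact (Measure.map_congr hid).trans Measure.map_id

instance nullSingletonClass_addCircle (T : ℝ) [Fact (0 < T)] :
    NullSingletonClass (volume : Measure (AddCircle T)) :=
  nullSingletonClass_of_measurePreserving (measurePreserving_coe_equivIco T 0)

/-- The index `j` of the arc `[j/q, (j+1)/q)` of the circle that contains `x`. -/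
noncomputable def arcIndex (q : ℕ) (x : Circle1) : ℕ :=
  ⌊q * (AddCircle.equivIco 1 0 x : ℝ)⌋₊

variable {q r : ℕ} (x : Circle1)

theorem measurable_arcIndex (q : ℕ) : Measurable (arcIndex q) :=
  Nat.measurable_floor.comp ((measurePreserving_coe_equivIco 1 0).measurable.const_mul _)

theorem arcIndex_lt (hq : 0 < q) : arcIndex q x < q := by
  obtain ⟨hx₀, hx₁⟩ := (AddCircle.equivIco (1 : ℝ) 0 x).2
  have hq' : (0 : ℝ) < q := Nat.cast_pos.2 hq
  rw [arcIndex, Nat.floor_lt (by positivity)]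
  nlinarith

theorem arcIndex_eq_iff (hq : 0 < q) {j : ℕ} :
    arcIndex q x = j ↔ (AddCircle.equivIco 1 0 x : ℝ) ∈ Ico ((j : ℝ) / q) ((j + 1) / q) := by
  have hx₀ := (AddCircle.equivIco (1 : ℝ) 0 x).2.1
  have hq' : (0 : ℝ) < q := Nat.cast_pos.2 hq
  rw [arcIndex, Nat.floor_eq_iff (by positivity), mem_Ico, div_le_iff₀ hq', lt_div_iff₀ hq',
    mul_comm]

theorem arcIndex_mul_div (hr : 0 < r) : arcIndex (q * r) x / r = arcIndex q x := by
  have hr' : (r : ℝ) ≠ 0 := Nat.cast_ne_zero.2 hr.ne'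
  rw [arcIndex, arcIndex, ← Nat.floor_div_natCast, Nat.cast_mul, mul_right_comm,
    mul_div_cancel_right₀ _ hr']

theorem mem_circleIco_iff {a b : ℝ} (ha : 0 ≤ a) (hb : b ≤ 1) :
    x ∈ circleIco a b ↔ (AddCircle.equivIco 1 0 x : ℝ) ∈ Ico a b := by
  refine ⟨?_, fun hx => ⟨_, hx, AddCircle.coe_equivIco⟩⟩
  rintro ⟨u, hu, rfl⟩
  have hu' : u ∈ Ico (0 : ℝ) (0 + 1) := ⟨ha.trans hu.1, by linarith [hu.2]⟩
  rwa [AddCircle.equivIco_coe_of_mem hu']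

theorem mem_circleIco_div_iff {j : ℕ} (hj : j < q) :
    x ∈ circleIco ((j : ℝ) / q) ((j + 1) / q) ↔ arcIndex q x = j := by
  have hq' : (0 : ℝ) < q := Nat.cast_pos.2 (Nat.zero_lt_of_lt hj)
  rw [arcIndex_eq_iff x (Nat.zero_lt_of_lt hj), mem_circleIco_iff x (by positivity)]
  rw [div_le_one hq']
  exact_mod_cast hj

theorem volume_arcIndex_preimage {j : ℕ} (hj : j < q) :
    volume (arcIndex q ⁻¹' {j}) = (q : ENNReal)⁻¹ := by
  have hq : 0 < q := Nat.zero_lt_of_lt hj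
  have hq' : (0 : ℝ) < q := Nat.cast_pos.2 hq
  have hpre : arcIndex q ⁻¹' {j} = (fun x : Circle1 => (AddCircle.equivIco 1 0 x : ℝ)) ⁻¹'
      Ico ((j : ℝ) / q) ((j + 1) / q) :=
    ext fun x => arcIndex_eq_iff x hq
  have hsub : Ico ((j : ℝ) / q) ((j + 1) / q) ⊆ Ico 0 (0 + 1) := by
    refine Ico_subset_Ico (by positivity) ?_
    rw [zero_add, div_le_one hq']
    exact_mod_cast hj
  rw [hpre, (measurePreserving_coe_equivIco 1 0).measure_preimage
    measurableSet_Ico.nullMeasurableSet, Measure.restrict_eq_self _ hsub, Real.volume_Ico,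
    ← sub_div, add_sub_cancel_left, one_div, ENNReal.ofReal_inv_of_pos hq', ENNReal.ofReal_natCast]

theorem riemannSet_mul_eq {n m : ℕ} (hn : 0 < n) (hm : 0 < m) (t : ℕ) :
    RiemannSet (n * m) n t = ⋃ i ∈ Finset.range n,
      circleIco ((t + i * m : ℕ) / (n * m : ℕ)) (((t + i * m : ℕ) + 1) / (n * m : ℕ)) := by
  refine iUnion₂_congr fun i _ => ?_
  have hn' : (n : ℝ) ≠ 0 := Nat.cast_ne_zero.2 hn.ne'
  have hm' : (m : ℝ) ≠ 0 := Nat.cast_ne_zero.2 hm.ne'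
  rw [circleIco]
  congr 2
  · push_cast
    field_simp
  · push_cast
    field_simp
    ring

theorem mem_riemannSet_iff {l n t : ℕ} (hl : 0 < l) (hn : n ∣ l) (ht : t < l / n) :
    x ∈ RiemannSet l n t ↔ arcIndex l x % (l / n) = t := by
  obtain ⟨m, rfl⟩ := hn
  have hn0 : 0 < n := Nat.pos_of_mul_pos_right hl
  have hm0 : 0 < m := Nat.pos_of_mul_pos_left hl
  rw [Nat.mul_div_cancel_left _ hn0] at ht ⊢
  have hidx {i : ℕ} (hi : i < n) : t + i * m < n * m := by nlinarith
  simp only [riemannSet_mul_eq hn0 hm0, mem_iUnion, Finset.mem_range, exists_prop]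
  constructor
  · rintro ⟨i, hi, hx⟩
    rw [(mem_circleIco_div_iff x (hidx hi)).1 hx, Nat.add_mul_mod_self_right, Nat.mod_eq_of_lt ht]
  · rintro rfl
    have hi : arcIndex (n * m) x / m < n :=
      (Nat.div_lt_iff_lt_mul hm0).2 (arcIndex_lt x hl)
    exact ⟨_, hi, (mem_circleIco_div_iff x (hidx hi)).2 (Nat.mod_add_div' _ _).symm⟩

end Circle

section DigitReversal

/-- The reversal of the `M` lowest base-`p` digits of `t`: the digit of `p ^ i` in `t` becomes the
digit of `p ^ (M - 1 - i)`, and the digits of `t` beyond the first `M` are dropped. -/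
def digitReverse (p : ℕ) : ℕ → ℕ → ℕ
  | 0, _ => 0
  | M + 1, t => p * digitReverse p M t + t / p ^ M % p

variable {p : ℕ} (hp : 0 < p) (M K s t : ℕ)
include hp

theorem digitReverse_lt : digitReverse p M t < p ^ M := by
  induction M with
  | zero => exact Nat.one_pos
  | succ M ih =>
    have hdigit := Nat.mod_lt (t / p ^ M) hp
    rw [digitReverse, pow_succ]
    nlinarith

theorem digitReverse_add_div_pow : digitReverse p (M + K) t / p ^ K = digitReverse p M t := by
  induction K with
  | zero => simp
  | succ K ih =>
    rw [← Nat.add_assoc, digitReverse, pow_succ, mul_comm (p ^ K), ← Nat.div_div_eq_div_mul,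
      Nat.mul_add_div hp, Nat.div_eq_of_lt (Nat.mod_lt _ hp), add_zero, ih]

theorem digitReverse_succ_eq_iff :
    digitReverse p (M + 1) s = digitReverse p (M + 1) t ↔
      digitReverse p M s = digitReverse p M t ∧ s / p ^ M % p = t / p ^ M % p := by
  refine ⟨fun h => ?_, fun ⟨hM, hdigit⟩ => by rw [digitReverse, digitReverse, hM, hdigit]⟩
  have hM : digitReverse p M s = digitReverse p M t := by
    rw [← digitReverse_add_div_pow hp M 1 s, h, digitReverse_add_div_pow hp]
  rw [digitReverse, digitReverse, hM] at h
  exact ⟨hM, Nat.add_left_cancel h⟩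

theorem modEq_pow_succ_iff :
    s ≡ t [MOD p ^ (M + 1)] ↔ s ≡ t [MOD p ^ M] ∧ s / p ^ M % p = t / p ^ M % p := by
  simp only [Nat.ModEq, pow_succ, Nat.mod_mul]
  refine ⟨fun h => ?_, fun ⟨hlow, hdigit⟩ => by rw [hlow, hdigit]⟩
  have hlow : s % p ^ M = t % p ^ M := by simpa using congrArg (· % p ^ M) h
  rw [hlow] at h
  exact ⟨hlow, Nat.eq_of_mul_eq_mul_left (pow_pos hp M) (Nat.add_left_cancel h)⟩

theorem digitReverse_eq_iff_modEq :
    digitReverse p M s = digitReverse p M t ↔ s ≡ t [MOD p ^ M] := by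
  induction M with
  | zero => simp [digitReverse, Nat.modEq_one]
  | succ M ih => rw [digitReverse_succ_eq_iff hp, modEq_pow_succ_iff hp, ih]

end DigitReversal

section ChineseRemainder

variable {κ : Type*} [Fintype κ] {q p N : κ → ℕ}

theorem modEq_prod_iff (hq : Pairwise fun i j => (q i).Coprime (q j)) {s t : ℕ} :
    s ≡ t [MOD ∏ k, q k] ↔ ∀ k, s ≡ t [MOD q k] := by
  refine ⟨fun h k => h.of_dvd (Finset.dvd_prod_of_mem q (Finset.mem_univ k)), fun h => ?_⟩
  simp only [Nat.modEq_iff_dvd] at h ⊢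
  rw [Nat.cast_prod]
  exact Fintype.prod_dvd_of_coprime (fun i j hij => Nat.isCoprime_iff_coprime.2 (hq hij)) h

theorem forall_digitReverse_eq_iff (hp : ∀ k, 0 < p k)
    (hpN : Pairwise fun i j => (p i ^ N i).Coprime (p j ^ N j)) {s t : ℕ} :
    (∀ k, digitReverse (p k) (N k) s = digitReverse (p k) (N k) t) ↔
      s ≡ t [MOD ∏ k, p k ^ N k] := by
  simp only [digitReverse_eq_iff_modEq (hp _), modEq_prod_iff hpN]

theorem exists_forall_digitReverse_eq (hp : ∀ k, 0 < p k)
    (hpN : Pairwise fun i j => (p i ^ N i).Coprime (p j ^ N j)) (j : ∀ k, Fin (p k ^ N k)) :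
    ∃ s < ∏ k, p k ^ N k, ∀ k, digitReverse (p k) (N k) s = j k := by
  classical
  let digits (s : Fin (∏ k, p k ^ N k)) (k : κ) : Fin (p k ^ N k) :=
    ⟨digitReverse (p k) (N k) s, digitReverse_lt (hp k) _ _⟩
  have hinj : Function.Injective digits := fun s t hst =>
    Fin.ext (((forall_digitReverse_eq_iff hp hpN).1 fun k =>
      congrArg Fin.val (congrFun hst k)).eq_of_lt_of_lt s.2 t.2)
  have hbij : Function.Bijective digits :=
    (Fintype.bijective_iff_injective_and_card digits).2 ⟨hinj, by simp⟩
  obtain ⟨s, hs⟩ := hbij.surjective j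
  exact ⟨s, s.2, fun k => congrArg Fin.val (congrFun hs k)⟩

end ChineseRemainder

section PrimePowers

theorem nthPrime_prime (k : ℕ) : (nthPrime k).Prime := Nat.prime_nth_prime k

theorem nthPrime_injective : Function.Injective nthPrime :=
  Nat.nth_injective Nat.infinite_setOfPred_prime

theorem pairwise_coprime_nthPrime_pow {d : ℕ} (N : Fin d → ℕ) :
    Pairwise fun i j : Fin d => (nthPrime i ^ N i).Coprime (nthPrime j ^ N j) := fun i j hij =>
  ((Nat.coprime_primes (nthPrime_prime i) (nthPrime_prime j)).2
    fun h => hij (Fin.ext (nthPrime_injective h))).pow _ _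

theorem prod_nthPrime_pow_factorization {m d : ℕ} (hm : m ≠ 0) (hmd : m ≤ d) :
    ∏ k : Fin d, nthPrime k ^ m.factorization (nthPrime k) = m := by
  let primes : Finset ℕ := (Finset.range d).image nthPrime
  have hsupp : m.factorization.support ⊆ primes := by
    intro p hp
    obtain ⟨k, rfl⟩ : ∃ k, nthPrime k = p :=
      ⟨_, Nat.nth_count (Nat.prime_of_mem_primeFactors hp)⟩
    have hk : k + 2 ≤ nthPrime k := Nat.add_two_le_nth_prime k
    have hkm : nthPrime k ≤ m := Nat.le_of_mem_primeFactors hp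
    exact Finset.mem_image_of_mem nthPrime (Finset.mem_range.2 (by omega))
  rw [Fin.prod_univ_eq_prod_range (fun k => nthPrime k ^ m.factorization (nthPrime k)) d,
    ← Finset.prod_image (g := nthPrime) (f := fun p => p ^ m.factorization p)
      nthPrime_injective.injOn,
    ← Finsupp.prod_of_support_subset _ hsupp (fun p e => p ^ e) fun _ _ => pow_zero _]
  exact Nat.prod_factorization_pow_eq_self hm

end PrimePowers

section Torus

variable {μ : Measure Tinf}

theorem IsProductLebesgue.measure_iInter_preimage (hμ : IsProductLebesgue μ) {d : ℕ}
    {A : Fin d → Set Circle1} (hA : ∀ k, MeasurableSet (A k)) :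
    μ (⋂ k : Fin d, (fun y : Tinf => y k) ⁻¹' A k) = ∏ k, volume (A k) := by
  let A' (i : ℕ) : Set Circle1 := if h : i < d then A ⟨i, h⟩ else univ
  have hA' (i : ℕ) : MeasurableSet (A' i) := by
    by_cases h : i < d
    · simpa only [A', dif_pos h] using hA ⟨i, h⟩
    · simp only [A', dif_neg h, MeasurableSet.univ]
  have hA'_fin (k : Fin d) : A' k = A k := dif_pos k.2
  have hset : (⋂ k : Fin d, (fun y : Tinf => y k) ⁻¹' A k) =
      {y | ∀ i ∈ Finset.range d, y i ∈ A' i} := by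
    ext y
    simp only [mem_iInter, mem_preimage, mem_ofPred_eq, Finset.mem_range, ← hA'_fin]
    exact Fin.forall_iff
  rw [hset, hμ.2 _ A' hA', ← Fin.prod_univ_eq_prod_range (fun i => volume (A' i))]
  simp only [hA'_fin]

theorem IsProductLebesgue.nullSingletonClass (hμ : IsProductLebesgue μ) :
    NullSingletonClass μ where
  measure_singleton y := by
    refine measure_mono_null (t := {z | ∀ i ∈ ({0} : Finset ℕ), z i ∈ ({y i} : Set Circle1)})
      (by rintro _ rfl i _; rfl) ?_
    rw [hμ.2 _ (fun i => {y i}) fun i => measurableSet_singleton _, Finset.prod_singleton,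
      measure_singleton]

variable {d : ℕ} {L j : Fin d → ℕ}

theorem mem_rect_iff (hj : ∀ k : Fin d, j k < nthPrime k ^ L k) (y : Tinf) :
    y ∈ Rect d L j ↔ ∀ k : Fin d, arcIndex (nthPrime k ^ L k) (y k) = j k :=
  forall_congr' fun k => mem_circleIco_div_iff _ (hj k)

theorem IsProductLebesgue.measure_rect (hμ : IsProductLebesgue μ)
    (hj : ∀ k : Fin d, j k < nthPrime k ^ L k) :
    μ (Rect d L j) = ((∏ k : Fin d, nthPrime k ^ L k : ℕ) : ENNReal)⁻¹ := by
  have hrect : Rect d L j =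
      ⋂ k : Fin d, (fun y : Tinf => y k) ⁻¹' (arcIndex (nthPrime k ^ L k) ⁻¹' {j k}) := by
    ext y
    simp only [mem_rect_iff hj, mem_iInter, mem_preimage, mem_singleton_iff]
  rw [hrect, hμ.measure_iInter_preimage fun k => measurable_arcIndex _ (measurableSet_singleton _)]
  simp only [volume_arcIndex_preimage (hj _)]
  rw [Nat.cast_prod, ENNReal.prod_inv_distrib]
  exact fun _ _ _ _ _ => .inr (ENNReal.natCast_ne_top _)

end Torus

section Addresses

/-- The addresses of the boxes `B_l`: the `k`-th entry of an address is an index below the exact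
power of the prime `nthPrime k` dividing `l`. All primes dividing `l` occur among the first `l`
primes, which is why `Fin l` indexes the entries. -/
abbrev Address (l : ℕ) : Type :=
  ∀ k : Fin l, Fin (nthPrime k ^ l.factorization (nthPrime k))

/-- The address of the box `B_l` containing a point of the torus. -/
noncomputable def torusAddress (l : ℕ) (y : Tinf) : Address l := fun k =>
  ⟨arcIndex _ (y k), arcIndex_lt _ (pow_pos (nthPrime_prime k).pos _)⟩

/-- The address assigned to the arc of length `1 / l` containing a point of the circle: digit
reversal turns the residues of the index of the arc into leading digits. -/
noncomputable def circleAddress (l : ℕ) (x : Circle1) : Address l := fun k =>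
  ⟨digitReverse (nthPrime k) _ (arcIndex l x), digitReverse_lt (nthPrime_prime k).pos _ _⟩

theorem measurable_of_measurable_finVal {X : Type*} [MeasurableSpace X] {n : ℕ} {f : X → Fin n}
    (hf : Measurable fun x => (f x : ℕ)) : Measurable f :=
  measurable_to_countable' fun j => by
    simpa only [preimage, mem_singleton_iff, Fin.ext_iff] using hf (measurableSet_singleton (j : ℕ))

theorem measurable_torusAddress (l : ℕ) : Measurable (torusAddress l) :=
  measurable_pi_lambda _ fun _ => measurable_of_measurable_finVal
    ((measurable_arcIndex _).comp (measurable_pi_apply _))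

theorem measurable_circleAddress (l : ℕ) : Measurable (circleAddress l) :=
  measurable_pi_lambda _ fun _ => measurable_of_measurable_finVal
    ((measurable_from_top (f := digitReverse _ _)).comp (measurable_arcIndex l))

variable {l : ℕ}

theorem torusAddress_preimage_singleton (j : Address l) :
    torusAddress l ⁻¹' {j} = Rect l (fun k => l.factorization (nthPrime k)) fun k => j k := by
  ext y
  rw [mem_rect_iff fun k => (j k).2]
  exact funext_iff.trans (forall_congr' fun k => Fin.ext_iff)

theorem IsProductLebesgue.measure_torusAddress_preimage {μ : Measure Tinf}
    (hμ : IsProductLebesgue μ) (hl : l ≠ 0) (j : Address l) :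
    μ (torusAddress l ⁻¹' {j}) = (l : ENNReal)⁻¹ := by
  rw [torusAddress_preimage_singleton, hμ.measure_rect fun k => (j k).2,
    prod_nthPrime_pow_factorization hl le_rfl]

theorem volume_circleAddress_preimage (hl : l ≠ 0) (j : Address l) :
    volume (circleAddress l ⁻¹' {j}) = (l : ENNReal)⁻¹ := by
  have hprod := prod_nthPrime_pow_factorization hl le_rfl
  have hpos (k : Fin l) : 0 < nthPrime k := (nthPrime_prime k).pos
  have hcoprime := pairwise_coprime_nthPrime_pow fun k : Fin l => l.factorization (nthPrime k)
  obtain ⟨s, hs, hsj⟩ := exists_forall_digitReverse_eq hpos hcoprime j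
  rw [hprod] at hs
  have hfiber : circleAddress l ⁻¹' {j} = arcIndex l ⁻¹' {s} := by
    ext x
    calc circleAddress l x = j
        ↔ ∀ k : Fin l, digitReverse (nthPrime k) (l.factorization (nthPrime k)) (arcIndex l x) =
            digitReverse (nthPrime k) (l.factorization (nthPrime k)) s := by
          simp only [hsj]
          exact funext_iff.trans (forall_congr' fun k => Fin.ext_iff)
      _ ↔ arcIndex l x ≡ s [MOD l] := by
          rw [forall_digitReverse_eq_iff hpos hcoprime, hprod]
      _ ↔ arcIndex l x = s :=
          ⟨fun h => h.eq_of_lt_of_lt (arcIndex_lt x (Nat.pos_of_ne_zero hl)) hs, fun h => h ▸ rfl⟩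
  rw [hfiber, volume_arcIndex_preimage hs]

theorem arcIndex_eq_digitReverse_of_address_eq {x : Circle1} {y : Tinf}
    (hxy : torusAddress l y = circleAddress l x) (k : Fin l) {M : ℕ}
    (hM : M ≤ l.factorization (nthPrime k)) :
    arcIndex (nthPrime k ^ M) (y k) = digitReverse (nthPrime k) M (arcIndex l x) := by
  have hp : 0 < nthPrime k := (nthPrime_prime k).pos
  have hk : arcIndex (nthPrime k ^ l.factorization (nthPrime k)) (y k) =
      digitReverse (nthPrime k) (l.factorization (nthPrime k)) (arcIndex l x) :=
    congrArg Fin.val (congrFun hxy k)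
  obtain ⟨K, hK⟩ := Nat.exists_eq_add_of_le hM
  rw [hK] at hk
  rw [← arcIndex_mul_div _ (pow_pos hp K), ← pow_add, hk, digitReverse_add_div_pow hp]

theorem mem_rect_iff_mem_riemannSet_of_address_eq {x : Circle1} {y : Tinf} (hl : l ≠ 0)
    (hxy : torusAddress l y = circleAddress l x) {n t : ℕ} (hn : n ∣ l) (ht : t < l / n) :
    y ∈ Rect l (fun k => (l / n).factorization (nthPrime k))
      (fun k => digitReverse (nthPrime k) ((l / n).factorization (nthPrime k)) t) ↔
    x ∈ RiemannSet l n t := by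
  have hm : l / n ≠ 0 := Nat.ne_zero_of_lt ht
  have hml : l / n ∣ l := Nat.div_dvd_of_dvd hn
  have hfac (k : Fin l) := (Nat.factorization_le_iff_dvd hm hl).2 hml (nthPrime k)
  have hpos (k : Fin l) : 0 < nthPrime k := (nthPrime_prime k).pos
  rw [mem_rect_iff fun k => digitReverse_lt (hpos k) _ _,
    mem_riemannSet_iff x (Nat.pos_of_ne_zero hl) hn ht]
  simp only [arcIndex_eq_digitReverse_of_address_eq hxy _ (hfac _)]
  rw [forall_digitReverse_eq_iff hpos (pairwise_coprime_nthPrime_pow _),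
    prod_nthPrime_pow_factorization hm (Nat.div_le_self l n), Nat.ModEq, Nat.mod_eq_of_lt ht]

end Addresses

/-- **Isomorphism of Riemann sets with rectangles.** For every `l ≥ 1` there is a
measure-preserving bijection `τ_l : 𝕋 → 𝕋^∞` carrying each Riemann set `I_l(n,t)`
onto a rectangle `B_m(j_1,…,j_d)` with `m = l/n`. -/
theorem exists_measurePreserving_bijection_riemannSet_to_rect
    (μ : Measure Tinf) (hμ : IsProductLebesgue μ) (l : ℕ) (hl : 1 ≤ l) :
    ∃ τ : Circle1 → Tinf, Function.Bijective τ ∧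
      (∀ A : Set Circle1, MeasurableSet A → μ (τ '' A) = volume A) ∧
      ∀ n t : ℕ, n ∣ l → t < l / n →
        ∃ (d : ℕ) (L j : Fin d → ℕ),
          (∀ k, j k < nthPrime k.val ^ L k) ∧
          (∏ k, nthPrime k.val ^ L k) = l / n ∧
          τ '' RiemannSet l n t = Rect d L j := by
  have hl0 : l ≠ 0 := Nat.ne_of_gt hl
  have := hμ.nullSingletonClass
  obtain ⟨τ, hτ, haddress⟩ := exists_measurableEquiv_measurePreserving_fiberwise
    (measurable_circleAddress l) (measurable_torusAddress l)
    (fun j => by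
      rw [volume_circleAddress_preimage hl0 j]
      exact ENNReal.inv_ne_zero.2 (ENNReal.natCast_ne_top l))
    (fun j => (volume_circleAddress_preimage hl0 j).trans
      (hμ.measure_torusAddress_preimage hl0 j).symm)
  refine ⟨τ, τ.bijective, fun A _ => ?_, fun n t hn ht => ⟨l,
    fun k => (l / n).factorization (nthPrime k),
    fun k => digitReverse (nthPrime k) ((l / n).factorization (nthPrime k)) t,
    fun k => digitReverse_lt (nthPrime_prime k).pos _ _,
    prod_nthPrime_pow_factorization (Nat.ne_zero_of_lt ht) (Nat.div_le_self l n), ?_⟩⟩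
  · rw [τ.image_eq_preimage_symm, (hτ.symm τ).measure_preimage_equiv]
  · ext y
    obtain ⟨x, rfl⟩ := τ.surjective y
    rw [τ.injective.mem_set_image,
      mem_rect_iff_mem_riemannSet_of_address_eq hl0 (haddress x) hn ht]
end

section
/- Fix d ≥ 1 and distinct primes p_1, p_2, …, p_d, and let (n_k) be the increasing enumeration of the set of integers of the form p_1^{k_1} p_2^{k_2} ⋯ p_d^{k_d} with k_1, …, k_d ∈ ℕ. If an increasing function φ : ℝ⁺ → ℝ⁺ satisfies lim_{x→∞} φ(x)/(x (ln x)^{d−1}) = 0, then there exists a function f ∈ L^φ(𝕋) such that the sequence (R_{n_k} f(x))_k diverges for every x ∈ 𝕋. -/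
open MeasureTheory Filter Set

/-!
Let `S` be the set of products of powers of the `p i`. The set `F` of points of the circle whose
order lies in `S` and is at most `X` has at least a constant times `X (log X) ^ (d - 1)` elements.
A random covering argument gives a set `A` of measure about `1 / #F` that meets `x + F` for all `x`
outside a small exceptional set. A nonnegative function equal to `X * B` on `A` has a Riemann sum
`≥ B` along `S` at those `x`, while the `φ`-cost `φ (X * B) / #F` tends to `0` as `X → ∞` by the
hypothesis on `φ`. The remaining `x` are treated by giving the function the value `B` on the
exceptional set.

Blocks `g j` of this kind with growing `B` are assembled into one function: with `q j` a power of
`p 0`, put `x ↦ g j (q j • x)` on an arc of length at least `1 / q j`, these arcs being disjoint.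
Such an arc meets every coset of the `q j`-torsion, so large values of `g j` on cosets of the
`n`-torsion become large values of the assembled function on cosets of the `q j * n`-torsion.
-/

open Topology

section TranslationCovers

variable {G : Type*} [MeasurableSpace G]

lemma exists_measure_inter_preimage_add_right_le [AddGroup G] [MeasurableAdd₂ G]
    (μ : Measure G) [IsProbabilityMeasure μ] [μ.IsAddLeftInvariant] {E W : Set G}
    (hE : MeasurableSet E) (hW : MeasurableSet W) :
    ∃ t, μ (E ∩ (· + t) ⁻¹' W) ≤ μ E * μ W := by
  have hshear := measurePreserving_prod_add μ μ
  have hEW : MeasurableSet (E ×ˢ W) := hE.prod hW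
  have hpre : MeasurableSet ((fun z : G × G => (z.1, z.1 + z.2)) ⁻¹' E ×ˢ W) :=
    hshear.measurable hEW
  obtain ⟨t, ht⟩ := exists_le_lintegral (μ := μ)
    (measurable_measure_prodMk_right (μ := μ) hpre).aemeasurable
  refine ⟨t, ht.trans_eq ?_⟩
  rw [← Measure.prod_apply_symm hpre, hshear.measure_preimage hEW.nullMeasurableSet,
    Measure.prod_prod]

lemma exists_finset_measure_biInter_preimage_add_right_le [AddGroup G] [MeasurableAdd₂ G]
    (μ : Measure G) [IsProbabilityMeasure μ] [μ.IsAddLeftInvariant] {W : Set G}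
    (hW : MeasurableSet W) (r : ℕ) :
    ∃ T : Finset G, T.card ≤ r ∧ μ (⋂ t ∈ T, (· + t) ⁻¹' W) ≤ μ W ^ r := by
  classical
  induction r with
  | zero => exact ⟨∅, by simp, by simp⟩
  | succ r ih =>
    obtain ⟨T, hcard, hT⟩ := ih
    have hmeas : MeasurableSet (⋂ t ∈ T, (· + t) ⁻¹' W) :=
      T.measurableSet_biInter fun t _ => hW.preimage (measurable_add_const t)
    obtain ⟨t, ht⟩ := exists_measure_inter_preimage_add_right_le μ hmeas hW
    refine ⟨insert t T, (Finset.card_insert_le t T).trans (by lia), ?_⟩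
    rw [Finset.set_biInter_insert, inter_comm, pow_succ]
    exact ht.trans (by gcongr)

lemma exists_isOpen_pairwiseDisjoint_preimage_add_right {G : Type*} [AddGroup G]
    [TopologicalSpace G] [IsTopologicalAddGroup G] [T2Space G] (F : Finset G) :
    ∃ U : Set G, IsOpen U ∧ 0 ∈ U ∧
      (F : Set G).PairwiseDisjoint fun y => (· + y) ⁻¹' U := by
  obtain ⟨V, hV, hdisj⟩ := F.finite_toSet.t2_separation
  refine ⟨⋂ y ∈ F, (y - ·) ⁻¹' V y,
    isOpen_biInter_finset fun y _ => (hV y).2.preimage (continuous_sub_left y), ?_, ?_⟩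
  · simp only [mem_iInter, mem_preimage, sub_zero]
    exact fun y _ => (hV y).1
  · intro y hy z hz hyz
    have neg_mem {x w : G} (hw : w ∈ F) (hx : x + w ∈ ⋂ y ∈ F, (y - ·) ⁻¹' V y) : -x ∈ V w := by
      simpa [sub_eq_add_neg] using mem_iInter₂.1 hx w hw
    exact disjoint_left.2 fun x hxy hxz =>
      disjoint_left.1 (hdisj hy hz hyz) (neg_mem hy hxy) (neg_mem hz hxz)

lemma measureReal_preimage_add_right [AddGroup G] [MeasurableAdd G] (μ : Measure G)
    [μ.IsAddRightInvariant] (U : Set G) (y : G) : μ.real ((· + y) ⁻¹' U) = μ.real U := by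
  simp only [measureReal_def, measure_preimage_add_right]

lemma measureReal_biUnion_preimage_add_right [AddGroup G] [MeasurableAdd G] (μ : Measure G)
    [IsFiniteMeasure μ] [μ.IsAddRightInvariant] {U : Set G} (hU : MeasurableSet U) {F : Finset G}
    (hdisj : (F : Set G).PairwiseDisjoint fun y => (· + y) ⁻¹' U) :
    μ.real (⋃ y ∈ F, (· + y) ⁻¹' U) = F.card * μ.real U := by
  rw [measureReal_biUnion_finset hdisj fun y _ => hU.preimage (measurable_add_const y)]
  simp only [measureReal_preimage_add_right, Finset.sum_const, nsmul_eq_mul]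

lemma measureReal_biUnion_preimage_add_right_le [AddGroup G] [MeasurableAdd G] (μ : Measure G)
    [μ.IsAddRightInvariant] (U : Set G) (F : Finset G) :
    μ.real (⋃ y ∈ F, (· + y) ⁻¹' U) ≤ F.card * μ.real U := by
  simpa only [measureReal_preimage_add_right, Finset.sum_const, nsmul_eq_mul] using
    measureReal_biUnion_finset_le (μ := μ) F fun y => (· + y) ⁻¹' U

lemma one_sub_pow_ceil_div_le_exp_neg {s : ℝ} (hs : 0 < s) (hs' : s ≤ 1) (Λ : ℝ) :
    (1 - s) ^ ⌈Λ / s⌉₊ ≤ Real.exp (-Λ) :=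
  calc (1 - s) ^ ⌈Λ / s⌉₊
      ≤ Real.exp (-s) ^ ⌈Λ / s⌉₊ :=
        pow_le_pow_left₀ (by linarith) (Real.one_sub_le_exp_neg s) _
    _ = Real.exp (-(⌈Λ / s⌉₊ * s)) := by rw [← Real.exp_nat_mul, mul_neg]
    _ ≤ Real.exp (-Λ) := by
        gcongr
        exact (div_le_iff₀ hs).1 (Nat.le_ceil _)

variable [AddCommGroup G] [TopologicalSpace G] [IsTopologicalAddGroup G] [T2Space G]
  [BorelSpace G] [MeasurableAdd₂ G]

/- `U` is a neighbourhood of `0` whose translates by `F` are disjoint, with union `P`. Removing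
`r` random translates of `P` leaves measure about `(1 - μ P) ^ r`; the same translates of `U`
alone have total measure at most `r * μ U = r * μ P / #F`. -/
lemma exists_measurableSet_forall_exists_add_mem (μ : Measure G) [IsProbabilityMeasure μ]
    [μ.IsAddLeftInvariant] [μ.IsOpenPosMeasure] {Λ : ℝ} (hΛ : 0 ≤ Λ) {F : Finset G}
    (hF : F.Nonempty) :
    ∃ A E : Set G, MeasurableSet A ∧ MeasurableSet E ∧ μ.real A ≤ (Λ + 1) / F.card ∧
      μ.real E ≤ Real.exp (-Λ) ∧ ∀ x ∉ E, ∃ y ∈ F, x + y ∈ A := by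
  obtain ⟨U, hUo, hU0, hdisj⟩ := exists_isOpen_pairwiseDisjoint_preimage_add_right F
  have hmeas (y : G) : MeasurableSet ((· + y) ⁻¹' U) :=
    hUo.measurableSet.preimage (measurable_add_const y)
  set P : Set G := ⋃ y ∈ F, (· + y) ⁻¹' U
  have hP : MeasurableSet P := F.measurableSet_biUnion fun y _ => hmeas y
  have hPvol : μ.real P = F.card * μ.real U :=
    measureReal_biUnion_preimage_add_right μ hUo.measurableSet hdisj
  have hU : 0 < μ.real U :=
    ENNReal.toReal_pos (hUo.measure_pos μ ⟨0, hU0⟩).ne' (measure_ne_top μ U)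
  have hcard : (0 : ℝ) < F.card := mod_cast hF.card_pos
  have hPpos : 0 < μ.real P := hPvol ▸ mul_pos hcard hU
  obtain ⟨T, hTcard, hT⟩ :=
    exists_finset_measure_biInter_preimage_add_right_le μ hP.compl ⌈Λ / μ.real P⌉₊
  refine ⟨⋃ t ∈ T, (· + t) ⁻¹' U, ⋂ t ∈ T, (· + t) ⁻¹' Pᶜ,
    T.measurableSet_biUnion fun t _ => hmeas t,
    T.measurableSet_biInter fun t _ => hP.compl.preimage (measurable_add_const t), ?_, ?_, ?_⟩
  · calc μ.real (⋃ t ∈ T, (· + t) ⁻¹' U)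
        ≤ T.card * μ.real U := measureReal_biUnion_preimage_add_right_le μ U T
      _ ≤ (Λ / μ.real P + 1) * μ.real U := by
          gcongr
          exact (Nat.cast_le.2 hTcard).trans (Nat.ceil_lt_add_one (by positivity)).le
      _ = (Λ + μ.real P) / F.card := by rw [hPvol]; field_simp
      _ ≤ (Λ + 1) / F.card := by gcongr; exact measureReal_le_one
  · calc μ.real (⋂ t ∈ T, (· + t) ⁻¹' Pᶜ)
        ≤ μ.real Pᶜ ^ ⌈Λ / μ.real P⌉₊ := by
          simpa only [measureReal_def, ENNReal.toReal_pow] using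
            ENNReal.toReal_mono (by finiteness) hT
      _ ≤ Real.exp (-Λ) := by
          rw [probReal_compl_eq_one_sub hP]
          exact one_sub_pow_ceil_div_le_exp_neg hPpos measureReal_le_one Λ
  · intro x hx
    obtain ⟨t, ht, y, hy, hU⟩ : ∃ t ∈ T, ∃ y ∈ F, x + t + y ∈ U := by simpa [P] using hx
    exact ⟨y, hy, mem_iUnion₂.2 ⟨t, ht, by rwa [mem_preimage, add_right_comm]⟩⟩

end TranslationCovers

section Peaks

variable {G : Type*} [AddCommGroup G]

/-- From every point, some translation by an `n`-torsion element with `n ∈ S` leads to a value of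
`g` that is at least `n * B`. On the circle, for `g ≥ 0`, this single term already gives
`B ≤ R_n g`. -/
def HasPeaks (S : Set ℕ) (B : ℝ) (g : G → ℝ) : Prop :=
  ∀ x, ∃ n ∈ S, ∃ u, n • u = 0 ∧ n * B ≤ g (x + u)

lemma HasPeaks.mono {S : Set ℕ} {B B' : ℝ} {g : G → ℝ} (hg : HasPeaks S B g) (hB : B' ≤ B) :
    HasPeaks S B' g := by
  intro x
  obtain ⟨n, hn, u, hu, hpeak⟩ := hg x
  exact ⟨n, hn, u, hu, (by gcongr : n * B' ≤ n * B).trans hpeak⟩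

lemma HasPeaks.of_comp_nsmul {S : Submonoid ℕ} {q : ℕ} (hq : q ∈ S)
    (hsurj : Function.Surjective fun z : G => q • z) {J : Set G}
    (hJ : ∀ x, ∃ u, q • u = 0 ∧ x + u ∈ J) {f g : G → ℝ}
    (hfg : EqOn f (fun x => g (q • x)) J) {B : ℝ} (hg : HasPeaks S (q * B) g) :
    HasPeaks S B f := by
  intro x
  obtain ⟨n, hn, y, hny, hpeak⟩ := hg (q • x)
  obtain ⟨z, rfl⟩ := hsurj y
  obtain ⟨u, hu, hxu⟩ := hJ (x + z)
  refine ⟨n * q, S.mul_mem hn hq, z + u, ?_, ?_⟩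
  · rw [mul_nsmul', nsmul_add, hu, add_zero, hny]
  · rw [← add_assoc, hfg hxu]
    simpa [nsmul_add, hu, mul_assoc] using hpeak

lemma lintegral_ofReal_comp_piecewise_le {α : Type*} [MeasurableSpace α] (μ : Measure α)
    [IsFiniteMeasure μ] {φ : ℝ → ℝ} (hφ_zero : φ 0 = 0) {A E : Set α} (hA : MeasurableSet A)
    (hE : MeasurableSet E) {a b : ℝ} (ha : 0 ≤ φ a) (hb : 0 ≤ φ b) :
    ∫⁻ x, ENNReal.ofReal (φ (SimpleFunc.piecewise A hA (.const α a)
      (.piecewise E hE (.const α b) 0) x)) ∂μ ≤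
      ENNReal.ofReal (μ.real A * φ a + μ.real E * φ b) := by
  classical
  calc ∫⁻ x, ENNReal.ofReal (φ (SimpleFunc.piecewise A hA (.const α a)
        (.piecewise E hE (.const α b) 0) x)) ∂μ
      ≤ ∫⁻ x, A.indicator (fun _ => ENNReal.ofReal (φ a)) x +
          E.indicator (fun _ => ENNReal.ofReal (φ b)) x ∂μ := by
        refine lintegral_mono fun x => ?_
        by_cases hxA : x ∈ A <;> by_cases hxE : x ∈ E <;> simp [hxA, hxE, hφ_zero]
    _ = ENNReal.ofReal (φ a) * μ A + ENNReal.ofReal (φ b) * μ E := by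
        rw [lintegral_add_left (measurable_const.indicator hA), lintegral_indicator_const hA,
          lintegral_indicator_const hE]
    _ = ENNReal.ofReal (μ.real A * φ a + μ.real E * φ b) := by
        rw [ENNReal.ofReal_add (by positivity) (by positivity),
          ENNReal.ofReal_mul measureReal_nonneg, ENNReal.ofReal_mul measureReal_nonneg,
          ofReal_measureReal, ofReal_measureReal, mul_comm, mul_comm (μ E)]

variable [TopologicalSpace G] [IsTopologicalAddGroup G] [T2Space G]
  [MeasurableSpace G] [BorelSpace G] [MeasurableAdd₂ G]

lemma exists_simpleFunc_hasPeaks_of_finset (μ : Measure G) [IsProbabilityMeasure μ]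
    [μ.IsAddLeftInvariant] [μ.IsOpenPosMeasure] {φ : ℝ → ℝ} (hφ_zero : φ 0 = 0)
    (hφ_nonneg : ∀ x ≥ 0, 0 ≤ φ x) {S : Set ℕ} (hS : 1 ∈ S) {M : ℕ} (hM : 1 ≤ M)
    {F : Finset G} (hF : F.Nonempty) (hFS : ∀ y ∈ F, addOrderOf y ∈ S ∧ addOrderOf y ≤ M)
    {B Λ : ℝ} (hB : 0 ≤ B) (hΛ : 0 ≤ Λ) :
    ∃ g : SimpleFunc G ℝ, (∀ x, 0 ≤ g x) ∧
      ∫⁻ x, ENNReal.ofReal (φ (g x)) ∂μ ≤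
        ENNReal.ofReal ((Λ + 1) / F.card * φ (M * B) + Real.exp (-Λ) * φ B) ∧
      HasPeaks S B g := by
  classical
  obtain ⟨A, E, hA, hE, hAvol, hEvol, hcover⟩ :=
    exists_measurableSet_forall_exists_add_mem μ hΛ hF
  have hMB : 0 ≤ M * B := by positivity
  let g : SimpleFunc G ℝ := .piecewise A hA (.const G (M * B)) (.piecewise E hE (.const G B) 0)
  have hgA {x : G} (hx : x ∈ A) : g x = M * B := by simp [g, hx]
  have hgE {x : G} (hx : x ∈ E) : B ≤ g x := by
    by_cases hxA : x ∈ A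
    · exact (le_mul_of_one_le_left hB (mod_cast hM)).trans_eq (hgA hxA).symm
    · simp [g, hxA, hx]
  refine ⟨g, fun x => ?_, ?_, fun x => ?_⟩
  · by_cases hxA : x ∈ A <;> by_cases hxE : x ∈ E <;> simp [g, hxA, hxE, hB, hMB]
  · refine (lintegral_ofReal_comp_piecewise_le μ hφ_zero hA hE (hφ_nonneg _ hMB)
      (hφ_nonneg _ hB)).trans ?_
    gcongr
    exacts [hφ_nonneg _ hMB, hφ_nonneg _ hB]
  · by_cases hx : x ∈ E
    · exact ⟨1, hS, 0, nsmul_zero 1, by simpa using hgE hx⟩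
    · obtain ⟨y, hy, hxy⟩ := hcover x hx
      refine ⟨addOrderOf y, (hFS y hy).1, y, addOrderOf_nsmul_eq_zero y, ?_⟩
      rw [hgA hxy]
      gcongr
      exact (hFS y hy).2

end Peaks

section PowerProducts

variable {ι : Type*} [Fintype ι]

/-- The multiplicative monoid of all integers `∏ i, p i ^ e i` with exponents `e i ∈ ℕ`. -/
def powerProducts (p : ι → ℕ) : Submonoid ℕ where
  carrier := {n | ∃ e : ι → ℕ, n = ∏ i, p i ^ e i}
  one_mem' := ⟨0, by simp⟩
  mul_mem' := by
    rintro _ _ ⟨e, rfl⟩ ⟨e', rfl⟩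
    exact ⟨e + e', by simp only [Pi.add_apply, pow_add, Finset.prod_mul_distrib]⟩

/-- The integers `p i` are multiplicatively independent: a product of their powers determines the
exponents. For integers this forces `1 < p i`. -/
def MultiplicativelyIndependent (p : ι → ℕ) : Prop :=
  Function.Injective fun e : ι → ℕ => ∏ i, p i ^ e i

lemma multiplicativelyIndependent_of_prime {p : ι → ℕ} (hp : ∀ i, (p i).Prime)
    (hinj : Function.Injective p) : MultiplicativelyIndependent p := by
  classical
  have hfact (e : ι → ℕ) (i : ι) : (∏ j, p j ^ e j).factorization (p i) = e i := by
    rw [Nat.factorization_prod_apply fun j _ => pow_ne_zero _ (hp j).ne_zero]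
    simp [(hp _).factorization, Finsupp.single_apply, hinj.eq_iff]
  intro e e' h
  ext i
  rw [← hfact e i, ← hfact e' i]
  exact congrArg (fun n => n.factorization (p i)) h

lemma prod_pow_pi_single [DecidableEq ι] (p : ι → ℕ) (i : ι) (k : ℕ) :
    ∏ j, p j ^ (Pi.single i k : ι → ℕ) j = p i ^ k := by
  rw [Fintype.prod_eq_single i fun j hj => by simp [hj], Pi.single_eq_same]

lemma pow_mem_powerProducts (p : ι → ℕ) (i : ι) (k : ℕ) : p i ^ k ∈ powerProducts p := by
  classical
  exact ⟨Pi.single i k, (prod_pow_pi_single p i k).symm⟩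

lemma dvd_prod_pow_of_mem_powerProducts {p : ι → ℕ} {n : ℕ} (hn : n ∈ powerProducts p) :
    ∃ k, n ∣ (∏ i, p i) ^ k := by
  obtain ⟨e, rfl⟩ := hn
  refine ⟨∑ i, e i, ?_⟩
  rw [← Finset.prod_pow]
  exact Finset.prod_dvd_prod_of_dvd _ _ fun i hi =>
    pow_dvd_pow _ (Finset.single_le_sum (fun _ _ => Nat.zero_le _) hi)

lemma MultiplicativelyIndependent.one_lt {p : ι → ℕ} (hp : MultiplicativelyIndependent p)
    (i : ι) : 1 < p i := by
  classical
  have hinj : Function.Injective fun k => p i ^ k := by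
    intro k k' h
    exact Pi.single_injective i
      (hp ((prod_pow_pi_single p i k).trans (h.trans (prod_pow_pi_single p i k').symm)))
  by_contra! hle
  interval_cases p i
  · exact absurd (@hinj 1 2 (by simp)) (by simp)
  · exact absurd (@hinj 0 1 (by simp)) (by simp)

lemma exists_pow_mul_le_and_lt {b m M : ℕ} (hb : 1 < b) (hm : 0 < m) (hmM : m ≤ M) :
    ∃ a, b ^ a * m ≤ M ∧ M < b * (b ^ a * m) := by
  refine ⟨Nat.log b (M / m), ?_, ?_⟩
  · exact (Nat.le_div_iff_mul_le hm).1 (Nat.pow_log_le_self b (Nat.div_pos hmM hm).ne')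
  · rw [← mul_assoc, ← pow_succ', ← Nat.div_lt_iff_lt_mul hm]
    exact Nat.lt_pow_succ_log_self hb _

/- The exponents of `p 1, …, p d` range over `{0, …, L}`; the exponent of `p 0` is then chosen to
land in the window just below `(∏ i, p i) ^ L`. -/
lemma MultiplicativelyIndependent.exists_finset_powerProducts {d : ℕ} {p : Fin (d + 1) → ℕ}
    (hp : MultiplicativelyIndependent p) (L : ℕ) :
    ∃ N : Finset ℕ, N.card = (L + 1) ^ d ∧
      ∀ n ∈ N, n ∈ powerProducts p ∧ n ≤ (∏ i, p i) ^ L ∧ (∏ i, p i) ^ L < p 0 * n := by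
  classical
  have hpos (i : Fin (d + 1)) : 0 < p i := (hp.one_lt i).le
  have htail (e : Fin d → Fin (L + 1)) :
      ∏ i : Fin d, p i.succ ^ (e i : ℕ) ≤ (∏ i, p i) ^ L :=
    calc ∏ i : Fin d, p i.succ ^ (e i : ℕ)
        ≤ (∏ i : Fin d, p i.succ) ^ L := by
          rw [← Finset.prod_pow]
          exact Finset.prod_le_prod' fun i _ => Nat.pow_le_pow_right (hpos _) (e i).is_le
      _ ≤ (∏ i, p i) ^ L := by
          rw [Fin.prod_univ_succ]
          exact Nat.pow_le_pow_left (Nat.le_mul_of_pos_left _ (hpos 0)) L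
  choose a hle hlt using fun e => exists_pow_mul_le_and_lt (hp.one_lt 0)
    (Finset.prod_pos fun i _ => pow_pos (hpos _) _) (htail e)
  let expo (e : Fin d → Fin (L + 1)) : Fin (d + 1) → ℕ := Fin.cons (a e) fun i => e i
  have hexpo (e : Fin d → Fin (L + 1)) :
      ∏ i, p i ^ expo e i = p 0 ^ a e * ∏ i : Fin d, p i.succ ^ (e i : ℕ) := by
    simp [expo, Fin.prod_univ_succ]
  have hinj : Function.Injective fun e => ∏ i, p i ^ expo e i := by
    refine hp.comp fun e e' h => ?_
    ext i
    simpa [expo] using congrFun h i.succ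
  refine ⟨Finset.univ.image fun e => ∏ i, p i ^ expo e i, ?_, ?_⟩
  · simp [Finset.card_image_of_injective _ hinj]
  · simp only [Finset.mem_image, Finset.mem_univ, true_and, forall_exists_index,
      forall_apply_eq_imp_iff]
    intro e
    refine ⟨⟨expo e, rfl⟩, ?_⟩
    rw [hexpo]
    exact ⟨hle e, hlt e⟩

end PowerProducts

lemma le_mul_totient_of_dvd_pow {n Q k : ℕ} (hQ : Q ≠ 0) (hn : n ∣ Q ^ k) :
    n ≤ Q * n.totient := by
  have hprimes : n.primeFactors ⊆ Q.primeFactors :=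
    (Nat.exists_dvd_pow_iff (ne_zero_of_dvd_ne_zero (pow_ne_zero k hQ) hn) hQ).1 ⟨k, hn⟩
  have hdvd : ∏ q ∈ n.primeFactors, q ∣ Q :=
    (Finset.prod_dvd_prod_of_subset _ _ _ hprimes).trans (Nat.prod_primeFactors_dvd Q)
  calc n ≤ n * ∏ q ∈ n.primeFactors, (q - 1) :=
        Nat.le_mul_of_pos_right n <| Finset.prod_pos fun q hq =>
          Nat.sub_pos_of_lt (Nat.prime_of_mem_primeFactors hq).one_lt
    _ = (∏ q ∈ n.primeFactors, q) * n.totient := by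
        rw [← Nat.totient_mul_prod_primeFactors, mul_comm]
    _ ≤ Q * n.totient := by gcongr; exact Nat.le_of_dvd hQ.bot_lt hdvd

lemma exists_finset_addCircle_addOrderOf_mem (T : ℝ) [Fact (0 < T)] {N : Finset ℕ}
    (hN : ∀ n ∈ N, 0 < n) :
    ∃ F : Finset (AddCircle T), F.card = ∑ n ∈ N, n.totient ∧ ∀ y ∈ F, addOrderOf y ∈ N := by
  classical
  have hfin : {y : AddCircle T | addOrderOf y ∈ N}.Finite := by
    refine (N.finite_toSet.biUnion fun n hn =>
      AddCircle.finite_setOfPred_addOrderOf_eq T (hN n hn)).subset fun y hy => ?_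
    exact mem_biUnion hy rfl
  refine ⟨hfin.toFinset, ?_, fun y hy => hfin.mem_toFinset.1 hy⟩
  rw [Finset.card_eq_sum_card_fiberwise (f := addOrderOf) (t := N) fun y hy =>
    hfin.mem_toFinset.1 hy]
  refine Finset.sum_congr rfl fun n hn => ?_
  rw [← AddCircle.card_addOrderOf_eq_totient T, ← Nat.card_eq_finsetCard]
  exact Nat.card_congr (Equiv.subtypeEquivRight fun y => by
    simpa using fun h : addOrderOf y = n => h ▸ hn)

lemma MultiplicativelyIndependent.exists_finset_torsion {d : ℕ} {p : Fin (d + 1) → ℕ}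
    (hp : MultiplicativelyIndependent p) (L : ℕ) :
    ∃ F : Finset Circle1,
      (L + 1) ^ d * (∏ i, p i) ^ L ≤ (p 0 * ∏ i, p i) * F.card ∧
      ∀ y ∈ F, addOrderOf y ∈ powerProducts p ∧ addOrderOf y ≤ (∏ i, p i) ^ L := by
  obtain ⟨N, hcard, hN⟩ := hp.exists_finset_powerProducts L
  have hQ : ∏ i, p i ≠ 0 := Finset.prod_ne_zero_iff.2 fun i _ => (hp.one_lt i).ne_bot
  obtain ⟨F, hF, hFN⟩ := exists_finset_addCircle_addOrderOf_mem 1 fun n hn =>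
    Nat.pos_of_mul_pos_left ((Nat.zero_le _).trans_lt (hN n hn).2.2)
  refine ⟨F, ?_, fun y hy => ⟨(hN _ (hFN y hy)).1, (hN _ (hFN y hy)).2.1⟩⟩
  rw [hF, Finset.mul_sum, ← hcard]
  refine (smul_eq_mul ..).ge.trans (Finset.card_nsmul_le_sum _ _ _ fun n hn => ?_)
  obtain ⟨hmem, -, hlt⟩ := hN n hn
  obtain ⟨k, hk⟩ := dvd_prod_pow_of_mem_powerProducts hmem
  calc (∏ i, p i) ^ L ≤ p 0 * n := hlt.le
    _ ≤ p 0 * ((∏ i, p i) * n.totient) := by gcongr; exact le_mul_totient_of_dvd_pow hQ hk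
    _ = (p 0 * ∏ i, p i) * n.totient := (mul_assoc ..).symm

section Blocks

lemma tendsto_div_pow_mul_pow {φ : ℝ → ℝ} {d : ℕ}
    (hφ : Tendsto (fun x => φ x / (x * Real.log x ^ d)) atTop (𝓝 0)) {Q B : ℝ} (hQ : 1 < Q)
    (hB : 0 < B) :
    Tendsto (fun L : ℕ => φ (Q ^ L * B) / ((L + 1) ^ d * Q ^ L)) atTop (𝓝 0) := by
  have hX : Tendsto (fun L : ℕ => Q ^ L * B) atTop atTop :=
    (tendsto_pow_atTop_atTop_of_one_lt hQ).atTop_mul_const hB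
  have hlog : Tendsto (fun L : ℕ => Real.log (Q ^ L * B) / (L + 1)) atTop (𝓝 (Real.log Q)) := by
    have hlim := ((tendsto_natCast_div_add_atTop (1 : ℝ)).mul_const (Real.log Q)).add
      ((tendsto_one_div_add_atTop_nhds_zero_nat (𝕜 := ℝ)).mul_const (Real.log B))
    rw [one_mul, zero_mul, add_zero] at hlim
    refine hlim.congr fun L => ?_
    rw [Real.log_mul (by positivity) hB.ne', Real.log_pow]
    ring
  have hlim := (hφ.comp hX).mul ((hlog.pow d).const_mul B)
  rw [zero_mul] at hlim
  refine hlim.congr' ?_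
  filter_upwards [hX.eventually_gt_atTop 1] with L hL
  have hlogX : Real.log (Q ^ L * B) ≠ 0 := (Real.log_pos hL).ne'
  simp only [Function.comp_apply, div_pow]
  field_simp

lemma MultiplicativelyIndependent.exists_finset_torsion_mul_le {d : ℕ} {p : Fin (d + 1) → ℕ}
    (hp : MultiplicativelyIndependent p) {φ : ℝ → ℝ} (hφ_nonneg : ∀ x ≥ 0, 0 ≤ φ x)
    (hφ : Tendsto (fun x => φ x / (x * Real.log x ^ d)) atTop (𝓝 0)) {B C η : ℝ} (hB : 0 < B)
    (hC : 0 ≤ C) (hη : 0 < η) :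
    ∃ M ≥ 1, ∃ F : Finset Circle1, F.Nonempty ∧
      (∀ y ∈ F, addOrderOf y ∈ powerProducts p ∧ addOrderOf y ≤ M) ∧
      C / F.card * φ (M * B) ≤ η := by
  have hQ : 1 < ∏ i, p i := (hp.one_lt 0).trans_le <|
    Finset.single_le_prod' (fun i _ => (hp.one_lt i).le) (Finset.mem_univ 0)
  set Q := ∏ i, p i
  have hlim := (tendsto_div_pow_mul_pow hφ (Q := Q) (mod_cast hQ) hB).const_mul (C * (p 0 * Q))
  rw [mul_zero] at hlim
  obtain ⟨L, hL⟩ := (hlim.eventually_le_const hη).exists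
  obtain ⟨F, hFcard, hF⟩ := hp.exists_finset_torsion L
  have hF0 : 0 < F.card :=
    Nat.pos_of_mul_pos_left ((by positivity : 0 < (L + 1) ^ d * Q ^ L).trans_le hFcard)
  have hFinv : 1 / (F.card : ℝ) ≤ p 0 * Q / ((L + 1) ^ d * Q ^ L) := by
    rw [div_le_div_iff₀ (by positivity) (by positivity), one_mul]
    exact mod_cast hFcard
  have hφX : 0 ≤ φ (Q ^ L * B) := hφ_nonneg _ (by positivity)
  refine ⟨Q ^ L, Nat.one_le_pow L Q (by lia), F, Finset.card_pos.1 hF0, hF, ?_⟩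
  calc C / F.card * φ ((Q ^ L : ℕ) * B)
      = C * φ (Q ^ L * B) * (1 / F.card) := by push_cast; ring
    _ ≤ C * φ (Q ^ L * B) * (p 0 * Q / ((L + 1) ^ d * Q ^ L)) :=
        mul_le_mul_of_nonneg_left hFinv (by positivity)
    _ = C * (p 0 * Q) * (φ (Q ^ L * B) / ((L + 1) ^ d * Q ^ L)) := by ring
    _ ≤ η := hL

instance isProbabilityMeasure_volume_circle1 : IsProbabilityMeasure (volume : Measure Circle1) :=
  ⟨by simp⟩

lemma MultiplicativelyIndependent.exists_simpleFunc_hasPeaks {d : ℕ} {p : Fin (d + 1) → ℕ}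
    (hp : MultiplicativelyIndependent p) {φ : ℝ → ℝ} (hφ_zero : φ 0 = 0)
    (hφ_nonneg : ∀ x ≥ 0, 0 ≤ φ x)
    (hφ : Tendsto (fun x => φ x / (x * Real.log x ^ d)) atTop (𝓝 0)) {B η : ℝ} (hB : 0 < B)
    (hη : 0 < η) :
    ∃ g : SimpleFunc Circle1 ℝ, (∀ x, 0 ≤ g x) ∧
      ∫⁻ x, ENNReal.ofReal (φ (g x)) ≤ ENNReal.ofReal η ∧ HasPeaks (powerProducts p) B g := by
  have hexp : Tendsto (fun Λ => Real.exp (-Λ) * φ B) atTop (𝓝 0) := by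
    simpa using Real.tendsto_exp_neg_atTop_nhds_zero.mul_const (φ B)
  obtain ⟨Λ, hΛη, hΛ⟩ :=
    ((hexp.eventually_le_const (half_pos hη)).and (eventually_ge_atTop 0)).exists
  obtain ⟨M, hM, F, hF, hFp, hFη⟩ :=
    hp.exists_finset_torsion_mul_le hφ_nonneg hφ hB (by positivity : 0 ≤ Λ + 1) (half_pos hη)
  obtain ⟨g, hg0, hgφ, hg⟩ := exists_simpleFunc_hasPeaks_of_finset volume hφ_zero hφ_nonneg
    (powerProducts p).one_mem hM hF hFp hB.le hΛ
  exact ⟨g, hg0, hgφ.trans (ENNReal.ofReal_le_ofReal (by linarith)), hg⟩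

end Blocks

section Arcs

/-- The arc of points of the circle whose representative in `[0, 1)` lies in `[a, b)`. -/
def circleArc (a b : ℝ) : Set Circle1 :=
  {x | (AddCircle.equivIco 1 0 x : ℝ) ∈ Ico a b}

lemma measurableSet_circleArc (a b : ℝ) : MeasurableSet (circleArc a b) :=
  measurableSet_Ico.preimage
    (measurable_subtype_coe.comp (AddCircle.measurableEquivIco 1 0).measurable)

lemma pairwise_disjoint_circleArc {a : ℕ → ℝ} (ha : Antitone a) :
    Pairwise (Function.onFun Disjoint fun j => circleArc (a (j + 1)) (a j)) :=
  fun _ _ hij => (ha.pairwise_disjoint_on_Ico_succ hij).preimage _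

lemma coe_mem_circleArc {a b r : ℝ} (ha : 0 ≤ a) (hb : b ≤ 1) (hr : r ∈ Ico a b) :
    (r : Circle1) ∈ circleArc a b := by
  have hr' : r ∈ Ico (0 : ℝ) (0 + 1) := ⟨ha.trans hr.1, by linarith [hr.2]⟩
  simpa only [circleArc, mem_ofPred_eq, AddCircle.equivIco_coe_eq hr'] using hr

lemma exists_nsmul_eq_zero_add_mem_circleArc {n : ℕ} (hn : 0 < n) {a b : ℝ} (ha : 0 ≤ a)
    (hb : b ≤ 1) (hab : a + (n : ℝ)⁻¹ ≤ b) (x : Circle1) :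
    ∃ u, n • u = 0 ∧ x + u ∈ circleArc a b := by
  obtain ⟨r, rfl⟩ := QuotientAddGroup.mk_surjective x
  have hn' : (0 : ℝ) < (n : ℝ)⁻¹ := by positivity
  refine ⟨(toIcoMod hn' a r - r : ℝ), ?_, ?_⟩
  · rw [← AddCircle.coe_nsmul, ← neg_sub, self_sub_toIcoMod, AddCircle.coe_eq_zero_iff]
    refine ⟨-toIcoDiv hn' a r, ?_⟩
    simp only [zsmul_eq_mul, nsmul_eq_mul]
    push_cast
    field_simp
  · have hmem := toIcoMod_mem_Ico hn' a r
    have hsum : (r : Circle1) + (toIcoMod hn' a r - r : ℝ) = toIcoMod hn' a r := by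
      rw [← AddCircle.coe_add, add_sub_cancel]
    exact hsum ▸ coe_mem_circleArc ha hb ⟨hmem.1, hmem.2.trans_le hab⟩

lemma surjective_nsmul_addCircle (T : ℝ) [Fact (0 < T)] {n : ℕ} (hn : n ≠ 0) :
    Function.Surjective fun z : AddCircle T => n • z := fun y => by
  obtain ⟨z, hz⟩ := DivisibleBy.surjective_smul (AddCircle T) ℤ (Int.natCast_ne_zero.2 hn) y
  exact ⟨z, by simpa using hz⟩

lemma exists_disjoint_sets_meeting_torsion_cosets {b : ℕ} (hb : 1 < b) :
    ∃ J : ℕ → Set Circle1, (∀ j, MeasurableSet (J j)) ∧ Pairwise (Function.onFun Disjoint J) ∧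
      ∀ j x, ∃ u, b ^ (j + 1) • u = 0 ∧ x + u ∈ J j := by
  let a (j : ℕ) : ℝ := ((b : ℝ) ^ j)⁻¹
  have hb1 : (1 : ℝ) ≤ b := mod_cast hb.le
  have ha : Antitone a := fun i j hij =>
    inv_anti₀ (by positivity) (pow_le_pow_right₀ hb1 hij)
  have hgap (j : ℕ) : a (j + 1) + ((b ^ (j + 1) : ℕ) : ℝ)⁻¹ ≤ a j :=
    calc a (j + 1) + ((b ^ (j + 1) : ℕ) : ℝ)⁻¹ = 2 / b * a j := by
          simp only [a, pow_succ]
          push_cast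
          field_simp
          norm_num
      _ ≤ a j := mul_le_of_le_one_left (by positivity) <|
          (div_le_one (by positivity)).2 (mod_cast hb)
  exact ⟨fun j => circleArc (a (j + 1)) (a j), fun j => measurableSet_circleArc _ _,
    pairwise_disjoint_circleArc ha, fun j => exists_nsmul_eq_zero_add_mem_circleArc
      (by positivity) (by positivity) (inv_le_one_of_one_le₀ (one_le_pow₀ hb1)) (hgap j)⟩

end Arcs

section RiemannSums

lemma div_le_riemannSum {f : Circle1 → ℝ} (hf : ∀ x, 0 ≤ f x) {n : ℕ} (hn : 0 < n) {u : Circle1}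
    (hu : n • u = 0) (x : Circle1) : f (x + u) / n ≤ RiemannSum n f x := by
  obtain ⟨m, hm, rfl⟩ := (AddCircle.nsmul_eq_zero_iff hn).1 hu
  rw [RiemannSum, div_eq_inv_mul, mul_one]
  gcongr
  exact Finset.single_le_sum (f := fun k : ℕ => f (x + ((k / n : ℝ) : Circle1)))
    (fun k _ => hf _) (Finset.mem_range.2 hm)

lemma not_bddAbove_riemannSum_of_hasPeaks {S : Set ℕ} (hS : ∀ n ∈ S, 0 < n) {f : Circle1 → ℝ}
    (hf : ∀ x, 0 ≤ f x) (hpeaks : ∀ B : ℝ, HasPeaks S B f) (x : Circle1) :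
    ¬ BddAbove (range fun k => RiemannSum (Nat.nth (· ∈ S) k) f x) := by
  rintro ⟨b, hb⟩
  obtain ⟨n, hn, u, hu, hpeak⟩ := hpeaks (b + 1) x
  obtain ⟨k, -, hk⟩ := Nat.exists_lt_card_nth_eq (p := (· ∈ S)) hn
  have hn0 : (0 : ℝ) < n := mod_cast hS n hn
  have hbn : b + 1 ≤ RiemannSum n f x :=
    ((le_div_iff₀' hn0).2 hpeak).trans (div_le_riemannSum hf (hS n hn) hu x)
  have hnb : RiemannSum n f x ≤ b := hb ⟨k, by simp only [hk]⟩
  linarith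

end RiemannSums

section Gluing

lemma exists_measurable_eqOn_of_pairwise_disjoint {ι α β : Type*} [Countable ι] [Nonempty ι]
    [MeasurableSpace α] [MeasurableSpace β] [Zero β] {J : ι → Set α}
    (hJ : ∀ j, MeasurableSet (J j)) (hdisj : Pairwise (Function.onFun Disjoint J))
    {h : ι → α → β} (hh : ∀ j, Measurable (h j)) :
    ∃ f, Measurable f ∧ (∀ j, EqOn f (h j) (J j)) ∧ ∀ x, (∀ j, x ∉ J j) → f x = 0 := by
  obtain ⟨f, hf, hfJ⟩ := exists_measurable_piecewise J hJ h hh fun i j hij x hx =>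
    (disjoint_left.1 (hdisj hij) hx.1 hx.2).elim
  refine ⟨(⋃ j, J j).indicator f, hf.indicator (.iUnion hJ), fun j x hx => ?_, fun x hx => ?_⟩
  · rw [indicator_of_mem (mem_iUnion_of_mem j hx), hfJ j hx]
  · exact indicator_of_notMem (by simpa using hx) f

lemma lintegral_ofReal_comp_le_tsum {ι α : Type*} [Countable ι] [MeasurableSpace α]
    {μ : Measure α} {φ : ℝ → ℝ} (hφ_zero : φ 0 = 0) {J : ι → Set α} {f : α → ℝ} {h : ι → α → ℝ}
    (hfh : ∀ j, EqOn f (h j) (J j)) (hf0 : ∀ x, (∀ j, x ∉ J j) → f x = 0)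
    (hφh : ∀ j, Measurable fun x => ENNReal.ofReal (φ (h j x))) :
    ∫⁻ x, ENNReal.ofReal (φ (f x)) ∂μ ≤ ∑' j, ∫⁻ x, ENNReal.ofReal (φ (h j x)) ∂μ := by
  rw [← lintegral_tsum fun j => (hφh j).aemeasurable]
  refine lintegral_mono fun x => ?_
  by_cases hx : ∃ j, x ∈ J j
  · obtain ⟨j, hj⟩ := hx
    rw [hfh j hj]
    exact ENNReal.le_tsum (f := fun j => ENNReal.ofReal (φ (h j x))) j
  · rw [hf0 x (not_exists.1 hx), hφ_zero, ENNReal.ofReal_zero]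
    exact zero_le

lemma lintegral_comp_nsmul_addCircle (T : ℝ) [Fact (0 < T)] {n : ℕ} (hn : 1 < n)
    {F : AddCircle T → ENNReal} (hF : Measurable F) : ∫⁻ x, F (n • x) = ∫⁻ x, F x :=
  (AddCircle.ergodic_nsmul hn).toMeasurePreserving.lintegral_comp hF

lemma exists_hasPeaks_of_forall_simpleFunc {S : Submonoid ℕ} {b : ℕ} (hb : 1 < b) (hbS : b ∈ S)
    {φ : ℝ → ℝ} (hφ_zero : φ 0 = 0)
    (hblock : ∀ B > 0, ∀ η > 0, ∃ g : SimpleFunc Circle1 ℝ, (∀ x, 0 ≤ g x) ∧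
      ∫⁻ x, ENNReal.ofReal (φ (g x)) ≤ ENNReal.ofReal η ∧ HasPeaks S B g) :
    ∃ f : Circle1 → ℝ, Measurable f ∧ (∀ x, 0 ≤ f x) ∧ ∫⁻ x, ENNReal.ofReal (φ (f x)) < ⊤ ∧
      ∀ B : ℝ, HasPeaks S B f := by
  obtain ⟨J, hJmeas, hJdisj, hJ⟩ := exists_disjoint_sets_meeting_torsion_cosets hb
  let q (j : ℕ) : ℕ := b ^ (j + 1)
  have hq (j : ℕ) : 1 < q j := Nat.one_lt_pow j.succ_ne_zero hb
  choose g hg0 hgφ hg using fun j : ℕ => hblock (q j * (j + 1))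
    (mul_pos (mod_cast zero_lt_one.trans (hq j)) (by positivity)) ((1 / 2) ^ j) (by positivity)
  have hqmeas (j : ℕ) : Measurable fun x : Circle1 => q j • x :=
    (continuous_nsmul (q j)).measurable
  have hφg (j : ℕ) : Measurable fun y => ENNReal.ofReal (φ (g j y)) :=
    ((g j).map fun y => ENNReal.ofReal (φ y)).measurable
  obtain ⟨f, hf, hfg, hf0⟩ := exists_measurable_eqOn_of_pairwise_disjoint hJmeas hJdisj
    fun j => (g j).measurable.comp (hqmeas j)
  refine ⟨f, hf, fun x => ?_, ?_, fun B => ?_⟩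
  · by_cases hx : ∃ j, x ∈ J j
    · obtain ⟨j, hj⟩ := hx
      exact (hfg j hj).symm ▸ hg0 j _
    · exact (hf0 x (not_exists.1 hx)).ge
  · calc ∫⁻ x, ENNReal.ofReal (φ (f x))
        ≤ ∑' j, ∫⁻ x, ENNReal.ofReal (φ (g j (q j • x))) :=
          lintegral_ofReal_comp_le_tsum hφ_zero hfg hf0 fun j => (hφg j).comp (hqmeas j)
      _ ≤ ∑' j : ℕ, ENNReal.ofReal ((1 / 2) ^ j) :=
          ENNReal.tsum_le_tsum fun j =>
            (lintegral_comp_nsmul_addCircle 1 (hq j) (hφg j)).trans_le (hgφ j)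
      _ < ⊤ := by
          rw [← ENNReal.ofReal_tsum_of_nonneg (fun j => by positivity) summable_geometric_two]
          exact ENNReal.ofReal_lt_top
  · obtain ⟨j, hj⟩ := exists_nat_gt B
    have hpeaks : HasPeaks S (j + 1) f := .of_comp_nsmul (pow_mem hbS (j + 1))
      (surjective_nsmul_addCircle 1 (by positivity)) (hJ j) (hfg j) (hg j)
    exact hpeaks.mono (by linarith)

end Gluing

theorem exists_Lphi_function_riemannSums_diverge_everywhere_general {d : ℕ} {p : Fin (d + 1) → ℕ}
    (hp : MultiplicativelyIndependent p) {φ : ℝ → ℝ} (hφ_nonneg : ∀ x ≥ 0, 0 ≤ φ x)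
    (hφ : Tendsto (fun x => φ x / (x * Real.log x ^ d)) atTop (𝓝 0)) :
    ∃ f : Circle1 → ℝ, Measurable f ∧ (∀ x, 0 ≤ f x) ∧
      (∫⁻ x, ENNReal.ofReal (φ |f x|)) < ⊤ ∧
      ∀ x, ¬ BddAbove (range fun k => RiemannSum (Nat.nth (· ∈ powerProducts p) k) f x) := by
  let ψ := Function.update φ 0 0
  have hψ_zero : ψ 0 = 0 := Function.update_self ..
  have hψ {x : ℝ} (hx : x ≠ 0) : ψ x = φ x := Function.update_of_ne hx ..
  have hψ_nonneg (x : ℝ) (hx : x ≥ 0) : 0 ≤ ψ x := by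
    rcases eq_or_ne x 0 with rfl | hx0
    exacts [hψ_zero.ge, hψ hx0 ▸ hφ_nonneg x hx]
  have hψ_lim : Tendsto (fun x => ψ x / (x * Real.log x ^ d)) atTop (𝓝 0) :=
    hφ.congr' <| (eventually_ne_atTop 0).mono fun x hx => by simp only [hψ hx]
  have hφψ (x : ℝ) : ENNReal.ofReal (φ x) ≤ ENNReal.ofReal (φ 0) + ENNReal.ofReal (ψ x) := by
    rcases eq_or_ne x 0 with rfl | hx0
    exacts [le_self_add, hψ hx0 ▸ le_add_self]
  obtain ⟨f, hf, hf0, hfψ, hpeaks⟩ := exists_hasPeaks_of_forall_simpleFunc (hp.one_lt 0)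
    (by simpa using pow_mem_powerProducts p 0 1) hψ_zero fun B hB η hη =>
      hp.exists_simpleFunc_hasPeaks hψ_zero hψ_nonneg hψ_lim hB hη
  refine ⟨f, hf, hf0, ?_, not_bddAbove_riemannSum_of_hasPeaks ?_ hf0 hpeaks⟩
  · calc ∫⁻ x, ENNReal.ofReal (φ |f x|)
        ≤ ∫⁻ x, ENNReal.ofReal (φ 0) + ENNReal.ofReal (ψ (f x)) :=
          lintegral_mono fun x => by rw [abs_of_nonneg (hf0 x)]; exact hφψ (f x)
      _ = ENNReal.ofReal (φ 0) + ∫⁻ x, ENNReal.ofReal (ψ (f x)) := by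
          rw [lintegral_add_left measurable_const, lintegral_const, measure_univ, mul_one]
      _ < ⊤ := ENNReal.add_lt_top.2 ⟨ENNReal.ofReal_lt_top, hfψ⟩
  · rintro _ ⟨e, rfl⟩
    exact Finset.prod_pos fun i _ => pow_pos (zero_lt_one.trans (hp.one_lt i)) _

/-- **Sharpness of the class `L log^{d-1} L` (Theorem 1).** Let `(n_k)` be the increasing
enumeration of `{p_1^{k_1} ⋯ p_d^{k_d} : k_i ∈ ℕ}` for fixed distinct primes `p_1,…,p_d`.
If an increasing `φ : ℝ⁺ → ℝ⁺` satisfies `φ(x)/(x ln^{d-1} x) → 0`, then there is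
`f ∈ L^φ(𝕋)` whose Riemann sums `R_{n_k} f(x)` diverge at every `x`. -/
theorem exists_Lphi_function_riemannSums_diverge_everywhere
    (d : ℕ) (hd : 1 ≤ d) (p : Fin d → ℕ) (hp : ∀ i, (p i).Prime)
    (hpinj : Function.Injective p)
    (φ : ℝ → ℝ) (hφmono : MonotoneOn φ (Set.Ici 0)) (hφpos : ∀ x ≥ (0:ℝ), 0 ≤ φ x)
    (hφ : Tendsto (fun x : ℝ => φ x / (x * Real.log x ^ (d - 1))) atTop (nhds 0)) :
    ∃ f : Circle1 → ℝ, Measurable f ∧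
      (∫⁻ x, ENNReal.ofReal (φ |f x|)) < ⊤ ∧
      ∀ x : Circle1, ¬ ∃ c : ℝ,
        Tendsto
          (fun k => RiemannSum
            (Nat.nth (fun n => ∃ e : Fin d → ℕ, n = ∏ i, p i ^ e i) k) f x)
          atTop (nhds c) := by
  obtain ⟨d, rfl⟩ := Nat.exists_eq_add_of_le' hd
  obtain ⟨f, hf, -, hfφ, hunbounded⟩ :=
    exists_Lphi_function_riemannSums_diverge_everywhere_general
      (multiplicativelyIndependent_of_prime hp hpinj) hφpos hφ
  exact ⟨f, hf, hfφ, fun x ⟨_, hc⟩ => hunbounded x hc.bddAbove_range⟩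
end
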